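/- For every k ∈ ℕ and every single index j ∈ {0,…,n−1} there exists a constant C_k > 0 such that, for every t > 0 and every point of S with r > 0, the k-fold derivative along the single vector field X_j satisfies |X_j^k (h_t ∘ r)| ≤ C_k Ψ_k(r,t) h_t(r), where Ψ_k(r,t) = (1 + 1/√t + r/t)^k if r > 1, or if r ≤ 1 and k is even, and Ψ_k(r,t) = r (1 + 1/√t + r/t)^{k-1} (1 + 1/t) if r ≤ 1 and k is odd. -/

import Mathlib

/-!
Write `u = cosh²(r/2)`, `D1 = -(1/sinh r) d/dr` and `D2 = -(1/sinh(r/2)) d/dr`. The bound rests on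
two independent facts, one on the heat kernel and one on the geometry of a single field.

*Heat kernel.* All functions `D1^m h_t` are nonnegative and
`D1^(m+1) h_t ≤ C_m Lam D1^m h_t` with the weight `Lam = (1 + (1 + r)/t) e^{-r}`. The class `CM` of
families with this property is stable under sums, products and averages over parameters. The
functions `1/cosh(r/2)` and the Stieltjes kernels `stj` belong to it since each solves a first order
equation whose right side is a product of members of the class (`CM.boot`), hence so does
`ψ = r/sinh(r/2) = 4 ∫ stj` (`integral_stj`). The Gaussian solves `D2 g = (1/2t) ψ g` and
`D1 g = (1/4t) (ψ/cosh(r/2)) g`, which gives the property for `D1^q D2^p g` (`CM_Gpq`), that is, for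
even `ν`. For odd `ν` the substitution `cosh s = cosh r + y²` turns the integral defining `h_t`
into an average that commutes with `D1`, and `Lam` is decreasing in `r` (`CM.abel`).

*Geometry.* With `U i = X_j^i u` one has `X_j (G ∘ r) = -2 (U 1) (D1 G) ∘ r`, so `X_j^k (h_t ∘ r)` is a
linear combination of products `U i_1 ⋯ U i_m (D1^m h_t) ∘ r` with `i_1 + ⋯ + i_m = k` (`Term`). For a
single field the `U i` are explicit, and satisfy `|U i| ≤ C u`, and moreover
`|U i| ≤ C √(u(u-1)) = C sinh r / 2` when `i` is odd. As `u ≤ e^r`, the product `|U i| Lam` is then at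
most `C Psi i` (`mul_Lam_le_Psi`), and `Psi` is submultiplicative in its order (`Psi_mul_le`), which
yields the bound `C Psi k h_t`.
-/

open Real MeasureTheory Filter Topology

noncomputable section

namespace DR

/-- The operator `𝓡 g (r) = (1 / sinh r) g'(r)`. -/
def Rop (g : ℝ → ℝ) : ℝ → ℝ := fun r => (1 / Real.sinh r) * deriv g r

/-- The operator `-(1 / sinh r) d/dr`. -/
def D1 (g : ℝ → ℝ) : ℝ → ℝ := fun r => -(1 / Real.sinh r) * deriv g r

/-- The operator `-(1 / sinh (r/2)) d/dr`. -/
def D2 (g : ℝ → ℝ) : ℝ → ℝ := fun r => -(1 / Real.sinh (r / 2)) * deriv g r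

/-- The Gaussian `e^{-r²/(4t)}`. -/
def gauss (t : ℝ) : ℝ → ℝ := fun r => Real.exp (-r ^ 2 / (4 * t))

/-- `Q = (μ + 2ν)/2`. -/
def Qc (μ ν : ℕ) : ℝ := ((μ : ℝ) + 2 * ν) / 2

/-- `c_k = 2^{-μ-ν/2-1-k} π^{-n/2}` with `n = μ+ν+1`. -/
def cc (μ ν k : ℕ) : ℝ :=
  (2 : ℝ) ^ (-(μ : ℝ) - (ν : ℝ) / 2 - 1 - (k : ℝ)) *
    Real.pi ^ (-(((μ : ℝ) + ν + 1)) / 2)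

/-- The Damek–Ricci heat kernel `h_t`. -/
def heat (μ ν : ℕ) (t : ℝ) : ℝ → ℝ := fun r =>
  if Even ν then
    cc μ ν 0 * t ^ (-(1 : ℝ) / 2) * Real.exp (-(Qc μ ν) ^ 2 * t / 4) *
      (D1^[ν / 2] (D2^[μ / 2] (gauss t))) r
  else
    cc μ ν 0 * Real.pi ^ (-(1 : ℝ) / 2) * t ^ (-(1 : ℝ) / 2) *
      Real.exp (-(Qc μ ν) ^ 2 * t / 4) *
      ∫ s in Set.Ioi r, (Real.sinh s / Real.sqrt (Real.cosh s - Real.cosh r)) *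
        (D1^[(ν + 1) / 2] (D2^[μ / 2] (gauss t))) s

/-- `Ψ_k(r,t)`. -/
def Psi (k : ℕ) (r t : ℝ) : ℝ :=
  if 1 < r ∨ Even k then (1 + 1 / Real.sqrt t + r / t) ^ k
  else r * (1 + 1 / Real.sqrt t + r / t) ^ (k - 1) * (1 + 1 / t)

/-- `Ψ̃_k(r,t)`. -/
def PsiT (k : ℕ) (r t : ℝ) : ℝ :=
  if 1 < r ∨ Even k then (1 + 1 / Real.sqrt t + r / t) ^ k
  else (1 + 1 / Real.sqrt t + r / t) ^ (k - 1) * (1 + r / t)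

/-- `p_{a,b}(r) = sinh^a r cosh^b r`. -/
def pab (a b : ℕ) (r : ℝ) : ℝ := Real.sinh r ^ a * Real.cosh r ^ b

/-- `Θ_{p,q}(r)` (with real exponents, via `rpow`). -/
def Theta (p q : ℝ) (r : ℝ) : ℝ :=
  ((r / (1 + r)) * (Real.exp (r / 2) / (2 * Real.sinh (r / 2)))) ^ p *
    ((r / (1 + 2 * r)) * (Real.exp r / Real.sinh r)) ^ q

/-- Points of `S = ℝ^μ × ℝ^ν × (0,∞)` (the last coordinate ranges over `ℝ`;
statements are always restricted to `0 < a`). -/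
abbrev Pt (μ ν : ℕ) := (Fin μ → ℝ) × (Fin ν → ℝ) × ℝ

/-- The quantity `((√a + 1/√a)/2 + |x|²/(8√a))² + |z|²/(4a)`, equal to `cosh²(r/2)`. -/
def coshExpr (μ ν : ℕ) (p : Pt μ ν) : ℝ :=
  ((Real.sqrt p.2.2 + (Real.sqrt p.2.2)⁻¹) / 2 +
      (Real.sqrt p.2.2)⁻¹ * (∑ i, p.1 i ^ 2) / 8) ^ 2 +
    (p.2.2)⁻¹ * (∑ i, p.2.1 i ^ 2) / 4

/-- The vector field `X_0 = a ∂_a`. -/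
def X0op (μ ν : ℕ) (f : Pt μ ν → ℝ) : Pt μ ν → ℝ :=
  fun p => p.2.2 * deriv (fun s => f (p.1, p.2.1, s)) p.2.2

/-- The vector fields `X_j`, `j ∈ {0, …, n-1}`, `n = μ+ν+1`:
`X_0 = a ∂_a`, `X_ℓ = √a (∂_{x_ℓ} + (1/2) Σ_k (J_k x, e_ℓ) ∂_{z_k})` for `ℓ = 1,…,μ`,
and `X_{μ+k} = a ∂_{z_k}` for `k = 1,…,ν`. -/
def Xf (μ ν : ℕ) (Jm : Fin ν → Matrix (Fin μ) (Fin μ) ℝ) (j : Fin (μ + ν + 1))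
    (f : Pt μ ν → ℝ) : Pt μ ν → ℝ := fun p =>
  if h0 : (j : ℕ) = 0 then p.2.2 * deriv (fun s => f (p.1, p.2.1, s)) p.2.2
  else if hm : (j : ℕ) ≤ μ then
    Real.sqrt p.2.2 *
      (deriv (fun s => f (Function.update p.1 ⟨(j : ℕ) - 1, by omega⟩ s, p.2.1, p.2.2))
          (p.1 ⟨(j : ℕ) - 1, by omega⟩) +
        (1 / 2) * ∑ k : Fin ν, (Jm k).mulVec p.1 ⟨(j : ℕ) - 1, by omega⟩ *
          deriv (fun s => f (p.1, Function.update p.2.1 k s, p.2.2)) (p.2.1 k))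
  else
    p.2.2 *
      deriv (fun s =>
          f (p.1, Function.update p.2.1 ⟨(j : ℕ) - μ - 1, by have := j.isLt; omega⟩ s, p.2.2))
        (p.2.1 ⟨(j : ℕ) - μ - 1, by have := j.isLt; omega⟩)

/-- `X_J = X_{J_1} X_{J_2} ⋯ X_{J_k}` for a multi-index `J`. -/
def XL (μ ν : ℕ) (Jm : Fin ν → Matrix (Fin μ) (Fin μ) ℝ) :
    List (Fin (μ + ν + 1)) → (Pt μ ν → ℝ) → Pt μ ν → ℝ
  | [], f => f
  | j :: L, f => Xf μ ν Jm j (XL μ ν Jm L f)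

/-! ### Completely monotone families -/

/-- Completely monotone families with comparable consecutive derivatives. A family `f i` of
functions on `r > 0` is in `CM lam N` when, up to order `N`, its iterates under
`D1 = -(1 / sinh r) d/dr` exist, are nonnegative, and satisfy
`D1^(q+1) (f i) ≤ C_q * lam i * D1^q (f i)` with `C_q` independent of the index `i`.
Continuity in `i` is recorded in order to integrate over the index; an index that is never
integrated over carries the discrete topology. -/
def CM {ι : Type} [TopologicalSpace ι] (lam : ι → ℝ → ℝ) : ℕ → (ι → ℝ → ℝ) → Prop
  | 0, f => (∀ i r, 0 < r → 0 ≤ f i r) ∧ ∀ r, 0 < r → Continuous fun i => f i r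
  | N + 1, f => ((∀ i r, 0 < r → 0 ≤ f i r) ∧ ∀ r, 0 < r → Continuous fun i => f i r) ∧
      (∀ i r, 0 < r → DifferentiableAt ℝ (f i) r) ∧
      (∃ C : ℝ, 0 ≤ C ∧ ∀ i r, 0 < r → D1 (f i) r ≤ C * lam i r * f i r) ∧
      CM lam N (fun i => D1 (f i))

lemma deriv_congr_pos {f g : ℝ → ℝ} (h : ∀ r, 0 < r → f r = g r) {r : ℝ} (hr : 0 < r) :
    deriv f r = deriv g r := by
  apply Filter.EventuallyEq.deriv_eq
  filter_upwards [Ioi_mem_nhds hr] with x hx using h x hx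

lemma D1_congr {f g : ℝ → ℝ} (h : ∀ r, 0 < r → f r = g r) (r : ℝ) (hr : 0 < r) :
    D1 f r = D1 g r := by
  simp only [D1, deriv_congr_pos h hr]

lemma D2_congr {f g : ℝ → ℝ} (h : ∀ r, 0 < r → f r = g r) (r : ℝ) (hr : 0 < r) :
    D2 f r = D2 g r := by
  simp only [D2, deriv_congr_pos h hr]

lemma differentiableAt_congr_pos {f g : ℝ → ℝ} (h : ∀ r, 0 < r → f r = g r) {r : ℝ}
    (hr : 0 < r) (hf : DifferentiableAt ℝ f r) : DifferentiableAt ℝ g r := by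
  refine hf.congr_of_eventuallyEq ?_
  filter_upwards [Ioi_mem_nhds hr] with x hx using (h x hx).symm

section

variable {ι : Type} [TopologicalSpace ι] {lam : ι → ℝ → ℝ}

lemma CM.base {N : ℕ} {f : ι → ℝ → ℝ} (h : CM lam N f) : CM lam 0 f := by
  cases N with
  | zero => exact h
  | succ N => exact h.1

lemma CM.nonneg {N : ℕ} {f : ι → ℝ → ℝ} (h : CM lam N f) (i : ι) {r : ℝ} (hr : 0 < r) :
    0 ≤ f i r := h.base.1 i r hr

lemma CM.cont {N : ℕ} {f : ι → ℝ → ℝ} (h : CM lam N f) {r : ℝ} (hr : 0 < r) :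
    Continuous fun i => f i r := h.base.2 r hr

lemma CM.congr {N : ℕ} {f g : ι → ℝ → ℝ} (h : CM lam N f)
    (hfg : ∀ i r, 0 < r → f i r = g i r) : CM lam N g := by
  induction N generalizing f g with
  | zero =>
    refine ⟨fun i r hr => hfg i r hr ▸ h.1 i r hr, fun r hr => ?_⟩
    simpa only [← hfg _ r hr] using h.2 r hr
  | succ N ih =>
    obtain ⟨⟨h1, h2⟩, h3, ⟨C, hC0, hC⟩, h5⟩ := h
    refine ⟨⟨fun i r hr => hfg i r hr ▸ h1 i r hr, fun r hr => ?_⟩, fun i r hr =>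
      differentiableAt_congr_pos (hfg i) hr (h3 i r hr), ⟨C, hC0, fun i r hr => ?_⟩,
      ih h5 fun i r hr => D1_congr (hfg i) r hr⟩
    · simpa only [← hfg _ r hr] using h2 r hr
    · rw [← D1_congr (hfg i) r hr, ← hfg i r hr]
      exact hC i r hr

lemma CM.pred {N : ℕ} {f : ι → ℝ → ℝ} (h : CM lam (N + 1) f) : CM lam N f := by
  induction N generalizing f with
  | zero => exact h.1
  | succ N ih => exact ⟨h.1, h.2.1, h.2.2.1, ih h.2.2.2⟩

lemma CM.mono_lam {lam' : ι → ℝ → ℝ} (hl : ∀ i r, 0 < r → lam i r ≤ lam' i r) {N : ℕ}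
    {f : ι → ℝ → ℝ} (h : CM lam N f) : CM lam' N f := by
  induction N generalizing f with
  | zero => exact h
  | succ N ih =>
    obtain ⟨h1, h3, ⟨C, hC0, hC⟩, h5⟩ := h
    refine ⟨h1, h3, ⟨C, hC0, fun i r hr => (hC i r hr).trans ?_⟩, ih h5⟩
    exact mul_le_mul_of_nonneg_right (mul_le_mul_of_nonneg_left (hl i r hr) hC0) (h1.1 i r hr)

lemma CM.comap {κ : Type} [TopologicalSpace κ] {e : κ → ι} (he : Continuous e) {N : ℕ}
    {f : ι → ℝ → ℝ} (h : CM lam N f) : CM (fun k => lam (e k)) N (fun k => f (e k)) := by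
  induction N generalizing f with
  | zero => exact ⟨fun i r hr => h.1 _ r hr, fun r hr => (h.2 r hr).comp he⟩
  | succ N ih =>
    obtain ⟨h1, h3, ⟨C, hC0, hC⟩, h5⟩ := h
    exact ⟨⟨fun i r hr => h1.1 _ r hr, fun r hr => (h1.2 r hr).comp he⟩, fun i => h3 _,
      ⟨C, hC0, fun i => hC _⟩, ih h5⟩

lemma D1_add {f g : ℝ → ℝ} {r : ℝ} (hf : DifferentiableAt ℝ f r) (hg : DifferentiableAt ℝ g r) :
    D1 (fun x => f x + g x) r = D1 f r + D1 g r := by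
  simp only [D1, deriv_fun_add hf hg]; ring

lemma D2_add {f g : ℝ → ℝ} {r : ℝ} (hf : DifferentiableAt ℝ f r) (hg : DifferentiableAt ℝ g r) :
    D2 (fun x => f x + g x) r = D2 f r + D2 g r := by
  simp only [D2, deriv_fun_add hf hg]; ring

lemma D1_mul {f g : ℝ → ℝ} {r : ℝ} (hf : DifferentiableAt ℝ f r) (hg : DifferentiableAt ℝ g r) :
    D1 (fun x => f x * g x) r = D1 f r * g r + f r * D1 g r := by
  simp only [D1, deriv_fun_mul hf hg]; ring

lemma D2_mul {f g : ℝ → ℝ} {r : ℝ} (hf : DifferentiableAt ℝ f r) (hg : DifferentiableAt ℝ g r) :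
    D2 (fun x => f x * g x) r = D2 f r * g r + f r * D2 g r := by
  simp only [D2, deriv_fun_mul hf hg]; ring

lemma CM.add (hl : ∀ i r, 0 < r → 0 ≤ lam i r) {N : ℕ} {f g : ι → ℝ → ℝ}
    (hf : CM lam N f) (hg : CM lam N g) : CM lam N (fun i r => f i r + g i r) := by
  induction N generalizing f g with
  | zero =>
    exact ⟨fun i r hr => add_nonneg (hf.1 i r hr) (hg.1 i r hr),
      fun r hr => (hf.2 r hr).add (hg.2 r hr)⟩
  | succ N ih =>
    obtain ⟨h1, h3, ⟨C, hC0, hC⟩, h5⟩ := hf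
    obtain ⟨k1, k3, ⟨C', hC0', hC'⟩, k5⟩ := hg
    refine ⟨⟨fun i r hr => add_nonneg (h1.1 i r hr) (k1.1 i r hr),
      fun r hr => (h1.2 r hr).add (k1.2 r hr)⟩, fun i r hr => (h3 i r hr).add (k3 i r hr),
      ⟨C + C', by positivity, fun i r hr => ?_⟩,
      (ih h5 k5).congr fun i r hr => (D1_add (h3 i r hr) (k3 i r hr)).symm⟩
    rw [D1_add (h3 i r hr) (k3 i r hr)]
    have a := hC i r hr
    have b := hC' i r hr
    have c1 := mul_nonneg (mul_nonneg hC0' (hl i r hr)) (h1.1 i r hr)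
    have c2 := mul_nonneg (mul_nonneg hC0 (hl i r hr)) (k1.1 i r hr)
    nlinarith

lemma CM.mul (hl : ∀ i r, 0 < r → 0 ≤ lam i r) {N : ℕ} {f g : ι → ℝ → ℝ}
    (hf : CM lam N f) (hg : CM lam N g) : CM lam N (fun i r => f i r * g i r) := by
  induction N generalizing f g with
  | zero =>
    exact ⟨fun i r hr => mul_nonneg (hf.1 i r hr) (hg.1 i r hr),
      fun r hr => (hf.2 r hr).mul (hg.2 r hr)⟩
  | succ N ih =>
    have hf' := hf.pred
    have hg' := hg.pred
    obtain ⟨h1, h3, ⟨C, hC0, hC⟩, h5⟩ := hf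
    obtain ⟨k1, k3, ⟨C', hC0', hC'⟩, k5⟩ := hg
    refine ⟨⟨fun i r hr => mul_nonneg (h1.1 i r hr) (k1.1 i r hr),
      fun r hr => (h1.2 r hr).mul (k1.2 r hr)⟩, fun i r hr => (h3 i r hr).mul (k3 i r hr),
      ⟨C + C', by positivity, fun i r hr => ?_⟩,
      ((ih h5 hg').add hl (ih hf' k5)).congr fun i r hr =>
        (D1_mul (h3 i r hr) (k3 i r hr)).symm⟩
    rw [D1_mul (h3 i r hr) (k3 i r hr)]
    have a := mul_le_mul_of_nonneg_right (hC i r hr) (k1.1 i r hr)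
    have b := mul_le_mul_of_nonneg_left (hC' i r hr) (h1.1 i r hr)
    linarith

lemma CM.const {c : ι → ℝ} (hc : ∀ i, 0 ≤ c i)
    (hcc : Continuous c) (N : ℕ) : CM lam N (fun i _ => c i) := by
  induction N generalizing c with
  | zero => exact ⟨fun i r _ => hc i, fun r _ => hcc⟩
  | succ N ih =>
    refine ⟨⟨fun i r _ => hc i, fun r _ => hcc⟩, fun i r _ => differentiableAt_const _,
      ⟨0, le_rfl, fun i r hr => by simp [D1]⟩, ?_⟩
    exact (ih (c := fun _ => 0) (fun _ => le_rfl) continuous_const).congr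
      fun i r hr => by simp [D1]

lemma CM.smul (hl : ∀ i r, 0 < r → 0 ≤ lam i r) {c : ι → ℝ} (hc : ∀ i, 0 ≤ c i)
    (hcc : Continuous c) {N : ℕ} {f : ι → ℝ → ℝ} (hf : CM lam N f) :
    CM lam N (fun i r => c i * f i r) :=
  (CM.const hc hcc N).mul hl hf

/-- A family solving a first order equation `D1 f = Φ(f)` for which `Φ` preserves every
order of complete monotonicity is itself completely monotone to all orders. -/
lemma CM.boot {f : ι → ℝ → ℝ} (h0 : CM lam 0 f)
    (hd : ∀ i r, 0 < r → DifferentiableAt ℝ (f i) r)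
    (hC : ∃ C : ℝ, 0 ≤ C ∧ ∀ i r, 0 < r → D1 (f i) r ≤ C * lam i r * f i r)
    (hstep : ∀ N, CM lam N f → CM lam N (fun i => D1 (f i))) (N : ℕ) : CM lam N f := by
  induction N with
  | zero => exact h0
  | succ N ih => exact ⟨h0, hd, hC, hstep N ih⟩

lemma CM.iterate {f : ι → ℝ → ℝ} (h : ∀ N, CM lam N f) (m N : ℕ) :
    CM lam N (fun i => D1^[m] (f i)) := by
  induction m generalizing f with
  | zero => exact h N
  | succ m ih => exact ih fun N => (h (N + 1)).2.2.2

/-- Each `D1^m f` is bounded by the `m`-th power of the weight times `f`. -/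
lemma CM.iterate_le (hl : ∀ i r, 0 < r → 0 ≤ lam i r) {f : ι → ℝ → ℝ} (h : ∀ N, CM lam N f)
    (m : ℕ) : ∃ C : ℝ, 0 ≤ C ∧ ∀ i r, 0 < r → D1^[m] (f i) r ≤ C * lam i r ^ m * f i r := by
  induction m generalizing f with
  | zero => exact ⟨1, zero_le_one, fun i r _ => by simp⟩
  | succ m ih =>
    obtain ⟨C, hC0, hC⟩ := ih (f := fun i => D1 (f i)) fun N => (h (N + 1)).2.2.2
    obtain ⟨C', hC0', hC'⟩ := (h 1).2.2.1
    refine ⟨C * C', by positivity, fun i r hr => ?_⟩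
    refine (hC i r hr).trans ?_
    have := mul_le_mul_of_nonneg_left (hC' i r hr)
      (mul_nonneg hC0 (pow_nonneg (hl i r hr) m))
    refine this.trans (le_of_eq ?_)
    ring

/-- Families all of whose iterates under `D2`, up to order `M`, are in `CM lam N` for every
`N`. -/
def KM (lam : ι → ℝ → ℝ) : ℕ → (ι → ℝ → ℝ) → Prop
  | 0, f => ∀ N, CM lam N f
  | M + 1, f => (∀ N, CM lam N f) ∧ KM lam M (fun i => D2 (f i))

lemma KM.cm {M : ℕ} {f : ι → ℝ → ℝ} (h : KM lam M f) (N : ℕ) : CM lam N f := by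
  cases M with
  | zero => exact h N
  | succ M => exact h.1 N

lemma KM.diff {M : ℕ} {f : ι → ℝ → ℝ} (h : KM lam M f) (i : ι) {r : ℝ} (hr : 0 < r) :
    DifferentiableAt ℝ (f i) r := (h.cm 1).2.1 i r hr

lemma KM.congr {M : ℕ} {f g : ι → ℝ → ℝ} (h : KM lam M f)
    (hfg : ∀ i r, 0 < r → f i r = g i r) : KM lam M g := by
  induction M generalizing f g with
  | zero => exact fun N => (h N).congr hfg
  | succ M ih =>
    exact ⟨fun N => (h.1 N).congr hfg, ih h.2 fun i r hr => D2_congr (hfg i) r hr⟩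

lemma KM.pred {M : ℕ} {f : ι → ℝ → ℝ} (h : KM lam (M + 1) f) : KM lam M f := by
  induction M generalizing f with
  | zero => exact h.1
  | succ M ih => exact ⟨h.1, ih h.2⟩

lemma KM.mono_lam {lam' : ι → ℝ → ℝ} (hl : ∀ i r, 0 < r → lam i r ≤ lam' i r) {M : ℕ}
    {f : ι → ℝ → ℝ} (h : KM lam M f) : KM lam' M f := by
  induction M generalizing f with
  | zero => exact fun N => (h N).mono_lam hl
  | succ M ih => exact ⟨fun N => (h.1 N).mono_lam hl, ih h.2⟩

lemma KM.comap {κ : Type} [TopologicalSpace κ] {e : κ → ι} (he : Continuous e) {M : ℕ}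
    {f : ι → ℝ → ℝ} (h : KM lam M f) : KM (fun k => lam (e k)) M (fun k => f (e k)) := by
  induction M generalizing f with
  | zero => exact fun N => (h N).comap he
  | succ M ih => exact ⟨fun N => (h.1 N).comap he, ih h.2⟩

lemma KM.add (hl : ∀ i r, 0 < r → 0 ≤ lam i r) {M : ℕ} {f g : ι → ℝ → ℝ}
    (hf : KM lam M f) (hg : KM lam M g) : KM lam M (fun i r => f i r + g i r) := by
  induction M generalizing f g with
  | zero => exact fun N => (hf N).add hl (hg N)
  | succ M ih =>
    exact ⟨fun N => (hf.1 N).add hl (hg.1 N), (ih hf.2 hg.2).congr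
      fun i r hr => (D2_add (hf.diff i hr) (hg.diff i hr)).symm⟩

lemma KM.mul (hl : ∀ i r, 0 < r → 0 ≤ lam i r) {M : ℕ} {f g : ι → ℝ → ℝ}
    (hf : KM lam M f) (hg : KM lam M g) : KM lam M (fun i r => f i r * g i r) := by
  induction M generalizing f g with
  | zero => exact fun N => (hf N).mul hl (hg N)
  | succ M ih =>
    exact ⟨fun N => (hf.1 N).mul hl (hg.1 N), ((ih hf.2 hg.pred).add hl (ih hf.pred hg.2)).congr
      fun i r hr => (D2_mul (hf.diff i hr) (hg.diff i hr)).symm⟩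

lemma KM.const {c : ι → ℝ} (hc : ∀ i, 0 ≤ c i)
    (hcc : Continuous c) (M : ℕ) : KM lam M (fun i _ => c i) := by
  induction M generalizing c with
  | zero => exact fun N => CM.const hc hcc N
  | succ M ih =>
    exact ⟨fun N => CM.const hc hcc N, (ih (c := fun _ => 0) (fun _ => le_rfl)
      continuous_const).congr fun i r hr => by simp [D2]⟩

lemma KM.smul (hl : ∀ i r, 0 < r → 0 ≤ lam i r) {c : ι → ℝ} (hc : ∀ i, 0 ≤ c i)
    (hcc : Continuous c) {M : ℕ} {f : ι → ℝ → ℝ} (hf : KM lam M f) :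
    KM lam M (fun i r => c i * f i r) :=
  (KM.const hc hcc M).mul hl hf

/-- Counterpart of `CM.boot` for families solving an equation `D2 f = Φ(f)`. -/
lemma KM.boot {f : ι → ℝ → ℝ} (h0 : ∀ N, CM lam N f)
    (hstep : ∀ M, KM lam M f → KM lam M (fun i => D2 (f i))) (M : ℕ) : KM lam M f := by
  induction M with
  | zero => exact h0
  | succ M ih => exact ⟨h0, hstep M ih⟩

lemma KM.iterate {f : ι → ℝ → ℝ} {p : ℕ} (h : KM lam p f) (N : ℕ) :
    CM lam N (fun i => D2^[p] (f i)) := by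
  induction p generalizing f with
  | zero => exact h N
  | succ p ih => exact ih h.2

end

/-! ### Integration over the index -/

/-- Integration over the index of a bounded family differentiates under the integral sign. -/
lemma hasDerivAt_integral_index {f f' : unitInterval → ℝ → ℝ} {B C : ℝ}
    (hf : ∀ s r, 0 < r → HasDerivAt (f s) (-(Real.sinh r * f' s r)) r)
    (hfc : ∀ r, 0 < r → Continuous fun s => f s r)
    (hfc' : ∀ r, 0 < r → Continuous fun s => f' s r)
    (hB : ∀ s r, 0 < r → |f s r| ≤ B) (hC : ∀ s r, 0 < r → |f' s r| ≤ C) {r : ℝ} (hr : 0 < r) :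
    HasDerivAt (fun x => ∫ s, f s x) (-(Real.sinh r * ∫ s, f' s r)) r := by
  have key := hasDerivAt_integral_of_dominated_loc_of_deriv_le (μ := (volume : Measure unitInterval))
    (F := fun x s => f s x) (F' := fun x s => -(Real.sinh x * f' s x)) (x₀ := r)
    (s := Set.Ioo 0 (2 * r)) (bound := fun _ => Real.sinh (2 * r) * C)
    (Ioo_mem_nhds hr (by linarith)) ?_ ?_ ?_ ?_ ?_ ?_
  · have h := key.2
    rwa [integral_neg, integral_const_mul] at h
  · filter_upwards [Ioi_mem_nhds hr] with x hx using (hfc x hx).aestronglyMeasurable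
  · exact Integrable.of_bound (hfc r hr).aestronglyMeasurable B
      (Eventually.of_forall fun s => hB s r hr)
  · exact ((hfc' r hr).const_mul _).neg.aestronglyMeasurable
  · refine Eventually.of_forall fun s x hx => ?_
    rw [norm_neg, norm_mul, Real.norm_eq_abs, Real.norm_eq_abs,
      abs_of_pos (Real.sinh_pos_iff.2 hx.1)]
    exact mul_le_mul (Real.sinh_le_sinh.2 hx.2.le) (hC s x hx.1) (abs_nonneg _)
      (Real.sinh_pos_iff.2 (by linarith)).le
  · exact integrable_const _
  · exact Eventually.of_forall fun s x hx => hf s x hx.1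

lemma hasDerivAt_of_D1 {f : ℝ → ℝ} {r : ℝ} (hr : 0 < r) (h : DifferentiableAt ℝ f r) :
    HasDerivAt f (-(Real.sinh r * D1 f r)) r := by
  have := (Real.sinh_pos_iff.2 hr).ne'
  have e : -(Real.sinh r * D1 f r) = deriv f r := by
    simp only [D1]; field_simp
  rw [e]
  exact h.hasDerivAt

lemma D1_eq_of_hasDerivAt {f : ℝ → ℝ} {r c : ℝ} (hr : 0 < r)
    (h : HasDerivAt f (-(Real.sinh r * c)) r) : D1 f r = c := by
  have := (Real.sinh_pos_iff.2 hr).ne'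
  simp only [D1, h.deriv]; field_simp

lemma D2_eq_D1 {f : ℝ → ℝ} {r : ℝ} (hr : 0 < r) : D2 f r = 2 * Real.cosh (r / 2) * D1 f r := by
  have h1 := (Real.sinh_pos_iff.2 (show 0 < r / 2 by linarith)).ne'
  have h2 := (Real.cosh_pos (r / 2)).ne'
  have h3 : Real.sinh r = 2 * Real.sinh (r / 2) * Real.cosh (r / 2) := by
    rw [← Real.sinh_two_mul]; ring_nf
  simp only [D2, D1, h3]; field_simp

lemma D1_le_bound {lam : unitInterval → ℝ → ℝ} (hl : ∀ i r, 0 < r → lam i r ≤ 1)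
    {f : unitInterval → ℝ → ℝ} (hf : CM lam 1 f) {B : ℝ}
    (hB : ∀ s r, 0 < r → f s r ≤ B) : ∃ C, ∀ s r, 0 < r → |D1 (f s) r| ≤ C := by
  obtain ⟨h1, h3, ⟨C, hC0, hC⟩, h5⟩ := hf
  refine ⟨C * B, fun s r hr => ?_⟩
  rw [abs_of_nonneg (h5.1 s r hr)]
  refine (hC s r hr).trans ?_
  have a := h1.1 s r hr
  calc C * lam s r * f s r ≤ C * 1 * f s r := by
        gcongr
        exact hl s r hr
    _ ≤ C * B := by rw [mul_one]; exact mul_le_mul_of_nonneg_left (hB s r hr) hC0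

lemma D1_integral {lam : unitInterval → ℝ → ℝ} (hl : ∀ i r, 0 < r → lam i r ≤ 1)
    {f : unitInterval → ℝ → ℝ} (hf : CM lam 1 f) {B : ℝ}
    (hB : ∀ s r, 0 < r → f s r ≤ B) {r : ℝ} (hr : 0 < r) :
    DifferentiableAt ℝ (fun x => ∫ s, f s x) r ∧
      D1 (fun x => ∫ s, f s x) r = ∫ s, D1 (f s) r := by
  obtain ⟨C, hC⟩ := D1_le_bound hl hf hB
  have := hasDerivAt_integral_index (f := f) (f' := fun s => D1 (f s)) (B := B) (C := C)
    (fun s r hr => hasDerivAt_of_D1 hr (hf.2.1 s r hr)) (fun r hr => hf.cont hr)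
    (fun r hr => hf.2.2.2.cont hr)
    (fun s r hr => by rw [abs_of_nonneg (hf.nonneg s hr)]; exact hB s r hr) hC hr
  exact ⟨this.differentiableAt, D1_eq_of_hasDerivAt hr this⟩

/-- Averaging over the index preserves complete monotonicity. The result is regarded as a
family (constant in its index) over an arbitrary index space. -/
lemma CM.integral {κ : Type} [TopologicalSpace κ] {l : ℝ → ℝ}
    (hl : ∀ r, 0 < r → l r ≤ 1) {N : ℕ} {f : unitInterval → ℝ → ℝ}
    (hf : ∀ n, CM (fun _ => l) n f) {B : ℝ} (hB : ∀ s r, 0 < r → f s r ≤ B) :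
    CM (fun _ : κ => l) N (fun _ r => ∫ s, f s r) := by
  induction N generalizing f B with
  | zero =>
    exact ⟨fun i r hr => integral_nonneg fun s => (hf 0).nonneg s hr,
      fun r hr => continuous_const⟩
  | succ N ih =>
    have hd := fun (r : ℝ) (hr : 0 < r) =>
      D1_integral (fun _ => hl) (hf 1) hB hr
    obtain ⟨C, hC⟩ := D1_le_bound (fun _ => hl) (hf 1) hB
    obtain ⟨C', hC0', hC'⟩ := (hf 1).2.2.1
    refine ⟨⟨fun i r hr => integral_nonneg fun s => (hf 0).nonneg s hr,
      fun r hr => continuous_const⟩, fun i r hr => (hd r hr).1, ⟨C', hC0', fun i r hr => ?_⟩,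
      (ih (f := fun s => D1 (f s)) (fun n => (hf (n + 1)).2.2.2)
        (fun s r hr => (le_abs_self _).trans (hC s r hr))).congr
        fun i r hr => (hd r hr).2.symm⟩
    rw [(hd r hr).2, ← integral_const_mul]
    refine integral_mono ?_ ?_ fun s => hC' s r hr
    · exact Integrable.of_bound ((hf 1).2.2.2.cont hr).aestronglyMeasurable C
        (Eventually.of_forall fun s => hC s r hr)
    · refine Integrable.const_mul ?_ _
      refine Integrable.of_bound ((hf 1).cont hr).aestronglyMeasurable B
        (Eventually.of_forall fun s => ?_)
      rw [Real.norm_eq_abs, abs_of_nonneg ((hf 1).nonneg s hr)]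
      exact hB s r hr

lemma KM.integral {κ : Type} [TopologicalSpace κ] {l : ℝ → ℝ}
    (hl : ∀ r, 0 < r → l r ≤ 1) {M : ℕ} {f : unitInterval → ℝ → ℝ}
    (hf : ∀ n, KM (fun _ => l) n f)
    (hB : ∀ m, ∃ B, ∀ s r, 0 < r → D2^[m] (f s) r ≤ B) :
    KM (fun _ : κ => l) M (fun _ r => ∫ s, f s r) := by
  obtain ⟨B, hB0⟩ := hB 0
  induction M generalizing f B with
  | zero => exact fun N => CM.integral hl (fun n => (hf 0).cm n) hB0
  | succ M ih =>
    refine ⟨fun N => CM.integral hl (fun n => (hf 0).cm n) hB0, ?_⟩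
    obtain ⟨B1, hB1⟩ := hB 1
    refine (ih (f := fun s => D2 (f s)) (fun n => (hf (n + 1)).2) (fun m => hB (m + 1))
      B1 hB1).congr fun i r hr => ?_
    rw [D2_eq_D1 hr, (D1_integral (fun _ => hl) ((hf 0).cm 1) hB0 hr).2,
      ← integral_const_mul]
    exact integral_congr_ae (Eventually.of_forall fun s => D2_eq_D1 hr)

/-! ### The Gaussian -/

lemma sinh_eq_half (r : ℝ) : Real.sinh r = 2 * Real.sinh (r / 2) * Real.cosh (r / 2) := by
  rw [← Real.sinh_two_mul]; ring_nf

lemma inv_cosh_half_sq_le (r : ℝ) : (Real.cosh (r / 2))⁻¹ ^ 2 ≤ 4 * Real.exp (-r) := by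
  have h1 : Real.exp (r / 2) / 2 ≤ Real.cosh (r / 2) := by
    rw [Real.cosh_eq]; have := Real.exp_pos (-(r / 2)); linarith
  have h2 : Real.exp r / 4 ≤ Real.cosh (r / 2) ^ 2 := by
    have : Real.exp r = Real.exp (r / 2) ^ 2 := by rw [← Real.exp_nat_mul]; ring_nf
    rw [this]
    have := Real.exp_pos (r / 2)
    nlinarith
  have h3 := Real.exp_pos r
  rw [inv_pow, Real.exp_neg]
  calc (Real.cosh (r / 2) ^ 2)⁻¹ ≤ (Real.exp r / 4)⁻¹ := by gcongr
    _ = 4 * (Real.exp r)⁻¹ := by field_simp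

lemma hasDerivAt_cosh_half (r : ℝ) :
    HasDerivAt (fun x => Real.cosh (x / 2)) (Real.sinh (r / 2) * (1 / 2)) r := by
  simpa using ((hasDerivAt_id r).div_const 2).cosh

/-- Both factors of `D1 (1/cosh(r/2)) = (1/4) (1/cosh(r/2))³` are controlled by
`1/cosh²(r/2) ≤ 4 e^{-r}`. -/
lemma CM_inv_cosh {κ : Type} [TopologicalSpace κ] (N : ℕ) :
    CM (fun (_ : κ) r => Real.exp (-r)) N (fun _ r => (Real.cosh (r / 2))⁻¹) := by
  have hl : ∀ (_ : κ) (r : ℝ), 0 < r → 0 ≤ Real.exp (-r) := fun _ r _ => (Real.exp_pos _).le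
  have hder : ∀ r : ℝ, HasDerivAt (fun x => (Real.cosh (x / 2))⁻¹)
      (-(Real.sinh r * (1 / 4 * ((Real.cosh (r / 2))⁻¹ *
        ((Real.cosh (r / 2))⁻¹ * (Real.cosh (r / 2))⁻¹))))) r := by
    intro r
    have h := (hasDerivAt_cosh_half r).inv (Real.cosh_pos _).ne'
    have h2 := (Real.cosh_pos (r / 2)).ne'
    refine h.congr_deriv ?_
    rw [sinh_eq_half r]; field_simp; ring
  have hD : ∀ r : ℝ, 0 < r → D1 (fun x => (Real.cosh (x / 2))⁻¹) r =
      1 / 4 * ((Real.cosh (r / 2))⁻¹ * ((Real.cosh (r / 2))⁻¹ * (Real.cosh (r / 2))⁻¹)) :=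
    fun r hr => D1_eq_of_hasDerivAt hr (hder r)
  refine CM.boot (f := fun _ r => (Real.cosh (r / 2))⁻¹)
    ⟨fun i r _ => (inv_pos.2 (Real.cosh_pos _)).le, fun r _ => continuous_const⟩
    (fun i r _ => (hder r).differentiableAt) ⟨1, zero_le_one, fun i r hr => ?_⟩
    (fun N h => ?_) N
  · rw [hD r hr]
    have h1 := inv_cosh_half_sq_le r
    have h2 := inv_pos.2 (Real.cosh_pos (r / 2))
    nlinarith
  · exact (CM.smul hl (c := fun _ => 1 / 4) (fun _ => by norm_num) continuous_const
      (h.mul hl (h.mul hl h))).congr fun i r hr => (hD r hr).symm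

/-- The kernel of the representation `r / sinh (r/2) = 4 ∫₀¹ stj s r ds`; it is a Stieltjes
function of `cosh (r/2)` for each `s`. -/
def stj (s : unitInterval) (r : ℝ) : ℝ :=
  ((1 - (s : ℝ) ^ 2) * Real.cosh (r / 2) + (1 + (s : ℝ) ^ 2))⁻¹

lemma unit_sq (s : unitInterval) : 0 ≤ 1 - (s : ℝ) ^ 2 ∧ 1 - (s : ℝ) ^ 2 ≤ 1 := by
  have h0 := s.2.1
  have h1 := s.2.2
  constructor <;> nlinarith

lemma stj_den (s : unitInterval) (r : ℝ) :
    1 ≤ (1 - (s : ℝ) ^ 2) * Real.cosh (r / 2) + (1 + (s : ℝ) ^ 2) := by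
  have h0 := mul_nonneg (unit_sq s).1 (Real.cosh_pos (r / 2)).le
  have := sq_nonneg (s : ℝ)
  linarith

lemma stj_pos (s : unitInterval) (r : ℝ) : 0 < stj s r :=
  inv_pos.2 (by linarith [stj_den s r])

lemma stj_le_one (s : unitInterval) (r : ℝ) : stj s r ≤ 1 := inv_le_one_of_one_le₀ (stj_den s r)

lemma stj_cont (r : ℝ) : Continuous fun s => stj s r := by
  unfold stj
  refine Continuous.inv₀ (by fun_prop) fun s => ?_
  linarith [stj_den s r]

lemma stj_hasDerivAt (s : unitInterval) (r : ℝ) : HasDerivAt (stj s)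
    (-(Real.sinh r * ((1 - (s : ℝ) ^ 2) / 4 * ((Real.cosh (r / 2))⁻¹ * (stj s r * stj s r))))) r := by
  have hd : (1 - (s : ℝ) ^ 2) * Real.cosh (r / 2) + (1 + (s : ℝ) ^ 2) ≠ 0 := by
    linarith [stj_den s r]
  have h := (((hasDerivAt_cosh_half r).const_mul (1 - (s : ℝ) ^ 2)).add_const
    (1 + (s : ℝ) ^ 2)).inv hd
  have h2 := (Real.cosh_pos (r / 2)).ne'
  refine h.congr_deriv ?_
  rw [sinh_eq_half r, stj]; field_simp; ring

lemma D1_stj (s : unitInterval) {r : ℝ} (hr : 0 < r) : D1 (stj s) r =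
    (1 - (s : ℝ) ^ 2) / 4 * ((Real.cosh (r / 2))⁻¹ * (stj s r * stj s r)) :=
  D1_eq_of_hasDerivAt hr (stj_hasDerivAt s r)

lemma D2_stj (s : unitInterval) {r : ℝ} (hr : 0 < r) : D2 (stj s) r =
    (1 - (s : ℝ) ^ 2) / 2 * (stj s r * stj s r) := by
  have h2 := (Real.cosh_pos (r / 2)).ne'
  rw [D2_eq_D1 hr, D1_stj s hr]; field_simp; ring

/-- `stj` solves `D1 f = ((1 - s²)/4) f² / cosh(r/2)`. -/
lemma CM_stj (N : ℕ) : CM (fun (_ : unitInterval) r => Real.exp (-r)) N stj := by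
  have hl : ∀ (_ : unitInterval) (r : ℝ), 0 < r → 0 ≤ Real.exp (-r) :=
    fun _ r _ => (Real.exp_pos _).le
  refine CM.boot ⟨fun i r _ => (stj_pos i r).le, fun r _ => stj_cont r⟩
    (fun i r _ => (stj_hasDerivAt i r).differentiableAt) ⟨1, zero_le_one, fun i r hr => ?_⟩
    (fun N h => ?_) N
  · rw [D1_stj i hr]
    have h1 := inv_cosh_half_sq_le r
    have h2 := inv_pos.2 (Real.cosh_pos (r / 2))
    have h4 := stj_pos i r
    -- `(1 - s²) cosh (r/2)` is at most the denominator of `stj s r`.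
    have h3 : (1 - (i : ℝ) ^ 2) * stj i r ≤ (Real.cosh (r / 2))⁻¹ := by
      rw [stj, ← div_eq_mul_inv, div_le_iff₀ (by linarith [stj_den i r])]
      have hc := (Real.cosh_pos (r / 2)).ne'
      have : (Real.cosh (r / 2))⁻¹ * ((1 - (i : ℝ) ^ 2) * Real.cosh (r / 2) + (1 + (i : ℝ) ^ 2))
        = (1 - (i : ℝ) ^ 2) + (Real.cosh (r / 2))⁻¹ * (1 + (i : ℝ) ^ 2) := by
        field_simp
      rw [this]
      have := mul_nonneg h2.le (show 0 ≤ 1 + (i : ℝ) ^ 2 by positivity)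
      linarith
    calc (1 - (i : ℝ) ^ 2) / 4 * ((Real.cosh (r / 2))⁻¹ * (stj i r * stj i r))
        = ((1 - (i : ℝ) ^ 2) * stj i r) * ((Real.cosh (r / 2))⁻¹ * stj i r) / 4 := by ring
      _ ≤ (Real.cosh (r / 2))⁻¹ * ((Real.cosh (r / 2))⁻¹ * stj i r) / 4 := by gcongr
      _ = (Real.cosh (r / 2))⁻¹ ^ 2 / 4 * stj i r := by ring
      _ ≤ 1 * Real.exp (-r) * stj i r := by
        gcongr
        linarith
  · exact (CM.smul hl (c := fun s : unitInterval => (1 - (s : ℝ) ^ 2) / 4)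
      (fun s => by linarith [(unit_sq s).1]) (by fun_prop)
      ((CM_inv_cosh N).mul hl (h.mul hl h))).congr fun i r hr => (D1_stj i hr).symm

/-- `stj` solves `D2 f = ((1 - s²)/2) f²`. -/
lemma KM_stj (M : ℕ) : KM (fun (_ : unitInterval) r => Real.exp (-r)) M stj := by
  have hl : ∀ (_ : unitInterval) (r : ℝ), 0 < r → 0 ≤ Real.exp (-r) :=
    fun _ r _ => (Real.exp_pos _).le
  refine KM.boot CM_stj (fun M h => ?_) M
  exact (KM.smul hl (c := fun s : unitInterval => (1 - (s : ℝ) ^ 2) / 2)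
      (fun s => by linarith [(unit_sq s).1]) (by fun_prop)
      (h.mul hl h)).congr fun i r hr => (D2_stj i hr).symm

lemma D2_iterate_congr {f g : ℝ → ℝ} (h : ∀ r, 0 < r → f r = g r) (m : ℕ) :
    ∀ r, 0 < r → D2^[m] f r = D2^[m] g r := by
  induction m generalizing f g with
  | zero => exact h
  | succ m ih => exact ih (D2_congr h)

lemma D2_const_mul {c : ℝ} {f : ℝ → ℝ} {r : ℝ} (hf : DifferentiableAt ℝ f r) :
    D2 (fun x => c * f x) r = c * D2 f r := by
  simp only [D2, deriv_const_mul c hf]; ring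

lemma D2_iterate_stj (s : unitInterval) (m : ℕ) : ∀ r, 0 < r → D2^[m] (stj s) r =
    m.factorial * ((1 - (s : ℝ) ^ 2) / 2) ^ m * stj s r ^ (m + 1) := by
  induction m with
  | zero => intro r _; simp
  | succ m ih =>
    intro r hr
    rw [Function.iterate_succ_apply', D2_congr ih r hr]
    have hd := (stj_hasDerivAt s r).pow (m + 1)
    have e : D2 (fun x => stj s x ^ (m + 1)) r = (m + 1) * stj s r ^ m * D2 (stj s) r := by
      simp only [D2]
      have : deriv (fun x => stj s x ^ (m + 1)) r = _ := hd.deriv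
      rw [this, (stj_hasDerivAt s r).deriv]
      push_cast
      ring
    rw [D2_const_mul (f := fun x => stj s x ^ (m + 1)) hd.differentiableAt, e, D2_stj s hr,
      Nat.factorial_succ]
    push_cast
    ring

/-- The Stieltjes representation of `ψ = r / sinh(r/2)`, evaluated through the primitive of
`stj` in `s`. -/
lemma integral_stj {r : ℝ} (hr : 0 < r) :
    r / Real.sinh (r / 2) = 4 * ∫ s : unitInterval, stj s r := by
  have hs := Real.sinh_pos_iff.2 (show 0 < r / 2 by linarith)
  have hb := Real.sinh_pos_iff.2 (show 0 < r / 2 / 2 by linarith)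
  have hbc : Real.sinh (r / 2 / 2) < Real.cosh (r / 2 / 2) := Real.sinh_lt_cosh _
  set a := Real.cosh (r / 2 / 2) with ha
  set b := Real.sinh (r / 2 / 2) with hb'
  have hab : a ^ 2 - b ^ 2 = 1 := Real.cosh_sq_sub_sinh_sq _
  have hsab : Real.sinh (r / 2) = 2 * b * a := sinh_eq_half _
  have hc : Real.cosh (r / 2) = a ^ 2 + b ^ 2 := by
    rw [show r / 2 = 2 * (r / 2 / 2) by ring, Real.cosh_two_mul]
  have h1 : ∫ s : unitInterval, stj s r =
      ∫ s in (0 : ℝ)..1, ((1 - s ^ 2) * Real.cosh (r / 2) + (1 + s ^ 2))⁻¹ := by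
    rw [intervalIntegral.integral_of_le zero_le_one, ← integral_Icc_eq_integral_Ioc]
    exact integral_subtype measurableSet_Icc
      (fun s : ℝ => ((1 - s ^ 2) * Real.cosh (r / 2) + (1 + s ^ 2))⁻¹)
  have hmem : ∀ s ∈ Set.uIcc (0 : ℝ) 1, 0 < a + s * b ∧ 0 < a - s * b := by
    intro s hs
    rw [Set.uIcc_of_le zero_le_one] at hs
    obtain ⟨h0, h1⟩ := hs
    constructor <;> nlinarith
  have hden : ∀ s : ℝ, (1 - s ^ 2) * Real.cosh (r / 2) + (1 + s ^ 2) =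
      2 * ((a + s * b) * (a - s * b)) := by
    intro s
    rw [hc]
    linear_combination (-(1 + s ^ 2)) * hab
  have h2 : ∫ s in (0 : ℝ)..1, ((1 - s ^ 2) * Real.cosh (r / 2) + (1 + s ^ 2))⁻¹ =
      1 / (2 * Real.sinh (r / 2)) * (Real.log (a + 1 * b) - Real.log (a - 1 * b)) -
      1 / (2 * Real.sinh (r / 2)) * (Real.log (a + 0 * b) - Real.log (a - 0 * b)) := by
    apply intervalIntegral.integral_eq_sub_of_hasDerivAt
      (f := fun s => 1 / (2 * Real.sinh (r / 2)) * (Real.log (a + s * b) - Real.log (a - s * b)))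
    · intro s hs'
      obtain ⟨p1, p2⟩ := hmem s hs'
      have d1 := (((hasDerivAt_id s).mul_const b).const_add a).log p1.ne'
      have d2 := (((hasDerivAt_id s).mul_const b).const_sub a).log p2.ne'
      have p1' : a + s * b ≠ 0 := p1.ne'
      have p2' : a - s * b ≠ 0 := p2.ne'
      have hb0 := hb.ne'
      have ha0 : a ≠ 0 := (Real.cosh_pos _).ne'
      refine ((d1.sub d2).const_mul (1 / (2 * Real.sinh (r / 2)))).congr_deriv ?_
      rw [hden, hsab]
      change 1 / (2 * (2 * b * a)) * (1 * b / (a + s * b) - -(1 * b) / (a - s * b)) = _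
      generalize hP : a + s * b = P at p1'
      generalize hM : a - s * b = M at p2'
      have hPM : P + M = 2 * a := by rw [← hP, ← hM]; ring
      have : 1 / (2 * (2 * b * a)) * (1 * b / P - -(1 * b) / M) =
          (P + M) / (4 * a * (P * M)) := by
        field_simp
        ring
      rw [this, hPM]
      field_simp
      ring
    · apply ContinuousOn.intervalIntegrable
      apply ContinuousOn.inv₀ (by fun_prop)
      intro s hs'
      obtain ⟨p1, p2⟩ := hmem s hs'
      rw [hden]
      positivity
  have e1 : a + b = Real.exp (r / 2 / 2) := Real.cosh_add_sinh _
  have e2 : a - b = Real.exp (-(r / 2 / 2)) := Real.cosh_sub_sinh _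
  rw [h1, h2]
  simp only [one_mul, zero_mul, add_zero, sub_zero, sub_self, mul_zero, e1, e2, Real.log_exp]
  field_simp
  ring

lemma KM_psi {κ : Type} [TopologicalSpace κ] (M : ℕ) :
    KM (fun (_ : κ) r => Real.exp (-r)) M (fun _ r => r / Real.sinh (r / 2)) := by
  have hl : ∀ (_ : κ) (r : ℝ), 0 < r → 0 ≤ Real.exp (-r) := fun _ r _ => (Real.exp_pos _).le
  refine (KM.smul hl (c := fun _ => 4) (fun _ => by norm_num) continuous_const
    (KM.integral (l := fun r => Real.exp (-r)) (fun r hr => Real.exp_le_one_iff.2 (by linarith))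
      (M := M) KM_stj fun m => ⟨m.factorial * 1 * 1, fun s r hr => ?_⟩)).congr
      fun i r hr => (integral_stj hr).symm
  rw [D2_iterate_stj s m r hr]
  have h0 := unit_sq s
  have := (stj_pos s r).le
  gcongr
  · exact pow_le_one₀ (by linarith) (by linarith)
  · exact pow_le_one₀ this (stj_le_one s r)

/-- The time parameter `t > 0`, with the discrete topology (see `CM`). -/
structure TT : Type where
  /-- the time -/
  val : ℝ
  pos : 0 < val

instance : TopologicalSpace TT := ⊥

instance : DiscreteTopology TT := ⟨rfl⟩

/-- The weight `(1 + (1 + r)/t) e^{-r}` relating consecutive derivatives of the heat kernel. -/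
def Lam (t : TT) (r : ℝ) : ℝ := (1 + (1 + r) / t.val) * Real.exp (-r)

lemma Lam_nonneg (t : TT) (r : ℝ) (hr : 0 < r) : 0 ≤ Lam t r := by
  have := t.pos
  unfold Lam
  positivity

lemma exp_le_Lam (t : TT) (r : ℝ) (hr : 0 < r) : Real.exp (-r) ≤ Lam t r := by
  have := t.pos
  have h : 0 ≤ (1 + r) / t.val := by positivity
  have := Real.exp_pos (-r)
  unfold Lam
  nlinarith

lemma gauss_hasDerivAt (t : TT) (r : ℝ) : HasDerivAt (gauss t.val)
    (-(r / (2 * t.val)) * gauss t.val r) r := by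
  have ht := t.pos.ne'
  have h := (((hasDerivAt_id r).pow 2).neg.div_const (4 * t.val)).exp
  refine h.congr_deriv ?_
  simp only [gauss, Pi.neg_apply, Pi.pow_apply, id]
  field_simp
  ring

lemma D1_gauss (t : TT) {r : ℝ} (hr : 0 < r) : D1 (gauss t.val) r =
    1 / (4 * t.val) * ((r / Real.sinh (r / 2)) * ((Real.cosh (r / 2))⁻¹ * gauss t.val r)) := by
  have ht := t.pos.ne'
  have h1 := (Real.sinh_pos_iff.2 (show 0 < r / 2 by linarith)).ne'
  have h2 := (Real.cosh_pos (r / 2)).ne'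
  rw [D1, (gauss_hasDerivAt t r).deriv, sinh_eq_half]
  field_simp
  ring

lemma D2_gauss (t : TT) {r : ℝ} (hr : 0 < r) : D2 (gauss t.val) r =
    1 / (2 * t.val) * ((r / Real.sinh (r / 2)) * gauss t.val r) := by
  have ht := t.pos.ne'
  have h1 := (Real.sinh_pos_iff.2 (show 0 < r / 2 by linarith)).ne'
  rw [D2, (gauss_hasDerivAt t r).deriv]
  field_simp

lemma ratio_gauss {r : ℝ} (hr : 0 < r) : r / Real.sinh r ≤ 2 * ((1 + r) * Real.exp (-r)) := by
  have hs := Real.sinh_pos_iff.2 hr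
  rw [div_le_iff₀ hs, Real.sinh_eq]
  have h1 : Real.exp (-r) * Real.exp r = 1 := by rw [← Real.exp_add]; simp
  have h2 : (1 + r) * Real.exp (-r) ≤ 1 := by
    have := Real.add_one_le_exp r
    have := Real.exp_pos (-r)
    nlinarith
  have h3 : Real.exp (-r) ≤ 1 := Real.exp_le_one_iff.2 (by linarith)
  have h4 := Real.exp_pos (-r)
  nlinarith

/-- The Gaussian solves `D1 g = (1/4t) ψ g / cosh(r/2)` with `ψ = r / sinh(r/2)`. -/
lemma CM_gauss (N : ℕ) : CM Lam N (fun t => gauss t.val) := by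
  refine CM.boot (f := fun t : TT => gauss t.val) 
    ⟨fun i r _ => (Real.exp_pos _).le, fun r _ => continuous_of_discreteTopology⟩
    (fun i r _ => (gauss_hasDerivAt i r).differentiableAt) ⟨1, zero_le_one, fun t r hr => ?_⟩
    (fun N h => ?_) N
  · have ht := t.pos
    have hg : 0 < gauss t.val r := Real.exp_pos _
    have hE := Real.exp_pos (-r)
    rw [D1, (gauss_hasDerivAt t r).deriv, one_mul]
    have : -(1 / Real.sinh r) * (-(r / (2 * t.val)) * gauss t.val r) =
        (r / Real.sinh r) / (2 * t.val) * gauss t.val r := by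
      have := (Real.sinh_pos_iff.2 hr).ne'
      field_simp
    rw [this]
    gcongr
    calc r / Real.sinh r / (2 * t.val) ≤ (2 * ((1 + r) * Real.exp (-r))) / (2 * t.val) := by
          gcongr
          exact ratio_gauss hr
      _ = (1 + r) / t.val * Real.exp (-r) := by field_simp
      _ ≤ Lam t r := by unfold Lam; nlinarith
  · exact (CM.smul Lam_nonneg (c := fun t : TT => 1 / (4 * t.val))
      (fun t => by have := t.pos; positivity) continuous_of_discreteTopology
      ((((KM_psi 0).cm N).mono_lam exp_le_Lam).mul Lam_nonneg
        (((CM_inv_cosh N).mono_lam exp_le_Lam).mul Lam_nonneg h))).congr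
        fun i r hr => (D1_gauss i hr).symm

/-- The Gaussian solves `D2 g = (1/2t) ψ g` with `ψ = r / sinh(r/2)`. -/
lemma KM_gauss (M : ℕ) : KM Lam M (fun t => gauss t.val) := by
  refine KM.boot CM_gauss (fun M h => ?_) M
  exact (KM.smul Lam_nonneg (c := fun t : TT => 1 / (2 * t.val))
      (fun t => by have := t.pos; positivity) continuous_of_discreteTopology
      (((KM_psi M).mono_lam exp_le_Lam).mul Lam_nonneg h)).congr
        fun i r hr => (D2_gauss i hr).symm

/-- The functions `D1^q D2^p e^{-r²/(4t)}` from which the heat kernel is built. -/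
def Gpq (p q : ℕ) (t : TT) : ℝ → ℝ := D1^[q] (D2^[p] (gauss t.val))

lemma CM_Gpq (p q N : ℕ) : CM Lam N (Gpq p q) :=
  CM.iterate (fun N => (KM_gauss p).iterate N) q N

/-! ### The Abel transform and the heat kernel -/

/-- The Abel transform occurring in the heat kernel for odd `ν`. -/
def Abel (f : ℝ → ℝ) (r : ℝ) : ℝ :=
  ∫ s in Set.Ioi r, (Real.sinh s / Real.sqrt (Real.cosh s - Real.cosh r)) * f s

/-- The substitution `cosh s = cosh r + y²` that removes the singularity of `Abel`. -/
def Ssub (r y : ℝ) : ℝ := Real.arcosh (Real.cosh r + y ^ 2)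

lemma one_lt_Ssub {r : ℝ} (hr : 0 < r) (y : ℝ) : 1 < Real.cosh r + y ^ 2 := by
  have := Real.one_lt_cosh.2 hr.ne'
  nlinarith [sq_nonneg y]

lemma cosh_Ssub {r : ℝ} (hr : 0 < r) (y : ℝ) :
    Real.cosh (Ssub r y) = Real.cosh r + y ^ 2 :=
  Real.cosh_arcosh (one_lt_Ssub hr y).le

lemma le_Ssub {r : ℝ} (hr : 0 < r) (y : ℝ) : r ≤ Ssub r y := by
  have h0 : 0 ≤ Ssub r y := Real.arcosh_nonneg (one_lt_Ssub hr y).le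
  have h : Real.cosh r ≤ Real.cosh (Ssub r y) := by
    rw [cosh_Ssub hr]; have := sq_nonneg y; linarith
  rwa [Real.cosh_le_cosh, abs_of_pos hr, abs_of_nonneg h0] at h

lemma Ssub_pos {r : ℝ} (hr : 0 < r) (y : ℝ) : 0 < Ssub r y := hr.trans_le (le_Ssub hr y)

lemma exp_Ssub_le {r : ℝ} (hr : 0 < r) (y : ℝ) :
    Real.exp (-(3 / 4) * Ssub r y) ≤ (1 + ‖y‖ ^ 2) ^ (-(3 / 2 : ℝ) / 2) := by
  have h1 : 1 + ‖y‖ ^ 2 ≤ Real.exp (Ssub r y) := by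
    have h := cosh_Ssub hr y
    have h2 := Real.one_lt_cosh.2 hr.ne'
    have h3 : Real.cosh (Ssub r y) ≤ Real.exp (Ssub r y) := by
      rw [Real.cosh_eq]
      have := Real.exp_le_exp.2 (show -Ssub r y ≤ Ssub r y by linarith [Ssub_pos hr y])
      linarith
    rw [Real.norm_eq_abs, sq_abs]
    linarith
  have h0 : 0 < 1 + ‖y‖ ^ 2 := by positivity
  have := Real.rpow_le_rpow_of_nonpos h0 h1 (show -(3 / 2 : ℝ) / 2 ≤ 0 by norm_num)
  refine le_trans (le_of_eq ?_) this
  rw [← Real.exp_mul]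
  ring_nf

lemma Ssub_continuous {r : ℝ} (hr : 0 < r) : Continuous fun y => Ssub r y := by
  refine continuous_iff_continuousAt.2 fun y => ?_
  have h := (Real.hasDerivAt_arcosh (x := Real.cosh r + y ^ 2) (one_lt_Ssub hr y)).continuousAt
  exact ContinuousAt.comp (f := fun y => Real.cosh r + y ^ 2) h (by fun_prop)

lemma Ssub_hasDerivAt {r : ℝ} (hr : 0 < r) (y : ℝ) :
    HasDerivAt (fun x => Ssub x y) (Real.sinh r / Real.sinh (Ssub r y)) r := by
  have h := (Real.hasDerivAt_arcosh (x := Real.cosh r + y ^ 2) (one_lt_Ssub hr y)).comp r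
    ((Real.hasDerivAt_cosh r).add_const (y ^ 2))
  refine h.congr_deriv ?_
  rw [Ssub, Real.sinh_arcosh (one_lt_Ssub hr y).le, div_eq_inv_mul]

/-- Holds without integrability assumptions: it is a change of variables. -/
lemma abel_eq (f : ℝ → ℝ) {r : ℝ} (hr : 0 < r) :
    Abel f r = 2 * ∫ y in Set.Ioi (0 : ℝ), f (Ssub r y) := by
  have hpos : ∀ x ∈ Set.Ioi r, 0 < Real.cosh x - Real.cosh r := by
    intro x hx
    have : r < x := hx
    rw [sub_pos, Real.cosh_lt_cosh, abs_of_pos hr, abs_of_pos (hr.trans this)]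
    exact this
  have himg : (fun x => Real.sqrt (Real.cosh x - Real.cosh r)) '' Set.Ioi r = Set.Ioi 0 := by
    ext y
    constructor
    · rintro ⟨x, hx, rfl⟩
      exact Real.sqrt_pos.2 (hpos x hx)
    · intro hy
      have hy : 0 < y := hy
      refine ⟨Ssub r y, ?_, ?_⟩
      · have h : Real.cosh r < Real.cosh (Ssub r y) := by
          rw [cosh_Ssub hr]; have : 0 < y ^ 2 := by positivity
          linarith
        rwa [Real.cosh_lt_cosh, abs_of_pos hr, abs_of_pos (Ssub_pos hr y)] at h
      · simp only [cosh_Ssub hr, add_sub_cancel_left]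
        exact Real.sqrt_sq hy.le
  have hinj : Set.InjOn (fun x => Real.sqrt (Real.cosh x - Real.cosh r)) (Set.Ioi r) := by
    intro x hx y hy hxy
    have h := (Real.sqrt_inj (hpos x hx).le (hpos y hy).le).1 hxy
    have hx' : 0 < x := hr.trans hx
    have hy' : 0 < y := hr.trans hy
    have h2 : Real.cosh x = Real.cosh y := by linarith
    have h3 := Real.cosh_abs x
    exact le_antisymm (by have := Real.cosh_le_cosh.1 h2.le; rwa [abs_of_pos hx', abs_of_pos hy'] at this)
      (by have := Real.cosh_le_cosh.1 h2.ge; rwa [abs_of_pos hx', abs_of_pos hy'] at this)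
  have hder : ∀ x ∈ Set.Ioi r, HasDerivWithinAt (fun x => Real.sqrt (Real.cosh x - Real.cosh r))
      (Real.sinh x / (2 * Real.sqrt (Real.cosh x - Real.cosh r))) (Set.Ioi r) x := by
    intro x hx
    exact (((Real.hasDerivAt_cosh x).sub_const _).sqrt (hpos x hx).ne').hasDerivWithinAt
  have key := integral_image_eq_integral_abs_deriv_smul measurableSet_Ioi hder hinj
    (fun y => f (Ssub r y))
  rw [himg] at key
  rw [key, ← integral_const_mul, Abel]
  refine setIntegral_congr_fun measurableSet_Ioi fun x hx => ?_
  have hx' : 0 < x := hr.trans hx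
  have h1 := Real.sqrt_pos.2 (hpos x hx)
  have h2 := Real.sinh_pos_iff.2 hx'
  have h3 : Ssub r (Real.sqrt (Real.cosh x - Real.cosh r)) = x := by
    rw [Ssub, Real.sq_sqrt (hpos x hx).le, add_sub_cancel, Real.arcosh_cosh hx'.le]
  simp only [smul_eq_mul, h3]
  rw [abs_of_pos (by positivity)]
  field_simp

lemma integrable_Ssub {f : ℝ → ℝ} (hf : ∀ r, 0 < r → ContinuousAt f r) {r B : ℝ} (hr : 0 < r)
    (hB : ∀ s, r ≤ s → |f s| ≤ B * Real.exp (-(3 / 4) * s)) (hB0 : 0 ≤ B) :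
    IntegrableOn (fun y => f (Ssub r y)) (Set.Ioi 0) := by
  refine Integrable.mono' (g := fun y => B * (1 + ‖y‖ ^ 2) ^ (-(3 / 2 : ℝ) / 2)) ?_ ?_ ?_
  · exact ((integrable_rpow_neg_one_add_norm_sq (by simp; norm_num)).const_mul B).integrableOn
  · refine Continuous.aestronglyMeasurable (continuous_iff_continuousAt.2 fun y => ?_)
    exact ContinuousAt.comp (hf _ (Ssub_pos hr y)) (Ssub_continuous hr).continuousAt
  · refine Eventually.of_forall fun y => (hB _ (le_Ssub hr y)).trans ?_
    exact mul_le_mul_of_nonneg_left (exp_Ssub_le hr y) hB0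

/-- The Abel transform commutes with `D1`. -/
lemma abel_hasDerivAt {f : ℝ → ℝ} (hf : ∀ r, 0 < r → DifferentiableAt ℝ f r)
    (hf' : ∀ r, 0 < r → ContinuousAt (D1 f) r) {r : ℝ} (hr : 0 < r) {B B' : ℝ}
    (hB0 : 0 ≤ B) (hB0' : 0 ≤ B')
    (hB : ∀ s, r ≤ s → |f s| ≤ B * Real.exp (-(3 / 4) * s))
    (hB' : ∀ s, r / 2 ≤ s → |D1 f s| ≤ B' * Real.exp (-(3 / 4) * s)) :
    HasDerivAt (Abel f) (-(Real.sinh r * Abel (D1 f) r)) r := by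
  have key := hasDerivAt_integral_of_dominated_loc_of_deriv_le
    (μ := volume.restrict (Set.Ioi (0 : ℝ)))
    (F := fun x y => f (Ssub x y)) (F' := fun x y => -(Real.sinh x * D1 f (Ssub x y))) (x₀ := r)
    (s := Set.Ioo (r / 2) (2 * r))
    (bound := fun y => Real.sinh (2 * r) * (B' * (1 + ‖y‖ ^ 2) ^ (-(3 / 2 : ℝ) / 2)))
    (Ioo_mem_nhds (by linarith) (by linarith)) ?_ ?_ ?_ ?_ ?_ ?_
  · have h := key.2
    rw [integral_neg, integral_const_mul] at h
    rw [abel_eq _ hr]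
    refine ((h.const_mul 2).congr_deriv (by ring)).congr_of_eventuallyEq ?_
    filter_upwards [Ioi_mem_nhds hr] with x hx using abel_eq f hx
  · filter_upwards [Ioi_mem_nhds hr] with x hx
    refine Continuous.aestronglyMeasurable (continuous_iff_continuousAt.2 fun y => ?_)
    exact ContinuousAt.comp (f := fun y => Ssub x y) (hf _ (Ssub_pos hx y)).continuousAt
      (Ssub_continuous hx).continuousAt
  · exact integrable_Ssub (fun r hr => (hf r hr).continuousAt) hr hB hB0
  · exact ((integrable_Ssub hf' hr (fun s hs => hB' s (by linarith)) hB0').const_mul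
      _).neg.aestronglyMeasurable
  · refine Eventually.of_forall fun y x hx => ?_
    have hx0 : 0 < x := by linarith [hx.1]
    rw [norm_neg, norm_mul, Real.norm_eq_abs, Real.norm_eq_abs,
      abs_of_pos (Real.sinh_pos_iff.2 hx0)]
    refine mul_le_mul (Real.sinh_le_sinh.2 hx.2.le) ?_ (abs_nonneg _)
      (Real.sinh_pos_iff.2 (by linarith)).le
    refine (hB' _ (by linarith [le_Ssub hx0 y, hx.1])).trans ?_
    exact mul_le_mul_of_nonneg_left (exp_Ssub_le hx0 y) hB0'
  · exact ((integrable_rpow_neg_one_add_norm_sq (by simp; norm_num)).const_mul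
      B').integrableOn.const_mul _
  · refine Eventually.of_forall fun y x hx => ?_
    have hx0 : 0 < x := by linarith [hx.1]
    have hS := Ssub_pos hx0 y
    have h := (hasDerivAt_of_D1 hS (hf _ hS)).comp x (Ssub_hasDerivAt hx0 y)
    refine h.congr_deriv ?_
    have := (Real.sinh_pos_iff.2 hS).ne'
    field_simp

/-- The decay that makes the Abel transform of a family converge. -/
def Dec (f : TT → ℝ → ℝ) : Prop :=
  ∀ t r, 0 < r → ∃ B : ℝ, 0 ≤ B ∧ ∀ s, r ≤ s → f t s ≤ B * Real.exp (-(3 / 4) * s)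

lemma Lam_anti (t : TT) {r s : ℝ} (hr : 0 < r) (hrs : r ≤ s) : Lam t s ≤ Lam t r := by
  have ht := t.pos
  have h1 : 1 + (1 + s) / t.val ≤ (1 + (1 + r) / t.val) * (1 + (s - r)) := by
    have e : (1 + (1 + r) / t.val) * (1 + (s - r)) - (1 + (1 + s) / t.val) =
        (s - r) + r * (s - r) / t.val := by field_simp; ring
    have : 0 ≤ r * (s - r) / t.val := div_nonneg (mul_nonneg hr.le (by linarith)) ht.le
    linarith
  have h2 : 1 + (s - r) ≤ Real.exp (s - r) := by linarith [Real.add_one_le_exp (s - r)]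
  have h3 : 0 ≤ 1 + (1 + r) / t.val := by positivity
  unfold Lam
  calc (1 + (1 + s) / t.val) * Real.exp (-s)
      ≤ ((1 + (1 + r) / t.val) * Real.exp (s - r)) * Real.exp (-s) := by
        gcongr
        exact h1.trans (mul_le_mul_of_nonneg_left h2 h3)
    _ = (1 + (1 + r) / t.val) * Real.exp (-r) := by
        rw [mul_assoc, ← Real.exp_add]; ring_nf

lemma Lam_le_exp (t : TT) {s : ℝ} (hs : 0 < s) :
    Lam t s ≤ 4 * (1 + 1 / t.val) * Real.exp (-(3 / 4) * s) := by
  have ht := t.pos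
  have h1 : 1 + (1 + s) / t.val ≤ (1 + 1 / t.val) * (1 + s) := by
    have e : (1 + 1 / t.val) * (1 + s) - (1 + (1 + s) / t.val) = s := by field_simp; ring
    linarith
  have h2 : 1 + s ≤ 4 * Real.exp (s / 4) := by linarith [Real.add_one_le_exp (s / 4)]
  have h3 : 0 ≤ 1 + 1 / t.val := by positivity
  unfold Lam
  calc (1 + (1 + s) / t.val) * Real.exp (-s)
      ≤ ((1 + 1 / t.val) * (4 * Real.exp (s / 4))) * Real.exp (-s) := by
        gcongr
        exact h1.trans (mul_le_mul_of_nonneg_left h2 h3)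
    _ = 4 * (1 + 1 / t.val) * (Real.exp (s / 4) * Real.exp (-s)) := by ring
    _ = _ := by rw [← Real.exp_add]; ring_nf

/-- A completely monotone family decreases in `r`. -/
lemma CM.anti {f : TT → ℝ → ℝ} (hf : CM Lam 1 f) (t : TT) {r s : ℝ} (hr : 0 < r) (hrs : r ≤ s) :
    f t s ≤ f t r := by
  have hsub : ∀ x ∈ Set.Ici r, 0 < x := fun x hx => hr.trans_le hx
  refine antitoneOn_of_deriv_nonpos (convex_Ici r)
    (fun x hx => (hf.2.1 t x (hsub x hx)).continuousAt.continuousWithinAt)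
    (fun x hx => (hf.2.1 t x (hsub x (interior_subset hx))).differentiableWithinAt)
    (fun x hx => ?_) (Set.self_mem_Ici) hrs hrs
  have hx0 := hsub x (interior_subset hx)
  rw [(hasDerivAt_of_D1 hx0 (hf.2.1 t x hx0)).deriv, neg_nonpos]
  exact mul_nonneg (Real.sinh_pos_iff.2 hx0).le (hf.2.2.2.1 t x hx0)

/-- For `D1 f` the factor `Lam` supplies the exponential decay, `f` being bounded by monotonicity. -/
lemma Dec.of_D1 {f : TT → ℝ → ℝ} (hf : CM Lam 1 f) : Dec (fun t => D1 (f t)) := by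
  intro t r hr
  obtain ⟨C, hC0, hC⟩ := hf.2.2.1
  have ht := t.pos
  have hfr := hf.nonneg t hr
  refine ⟨C * (4 * (1 + 1 / t.val)) * f t r, by positivity, fun s hs => ?_⟩
  have hs0 := hr.trans_le hs
  have hfs := hf.nonneg t hs0
  calc D1 (f t) s ≤ C * Lam t s * f t s := hC t s hs0
    _ ≤ C * (4 * (1 + 1 / t.val) * Real.exp (-(3 / 4) * s)) * f t r := by
        gcongr
        · exact Lam_le_exp t hs0
        · exact hf.anti t hr hs
    _ = _ := by ring

/-- The Abel transform preserves complete monotonicity: it commutes with `D1`, and the weight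
`Lam t` is decreasing, so the pointwise ratio bound at `s > r` may be taken at `r`. -/
lemma CM.abel {N : ℕ} {f : TT → ℝ → ℝ} (hf : ∀ n, CM Lam n f) (hdec : Dec f) :
    CM Lam N (fun t => Abel (f t)) := by
  have hnn : ∀ {f : TT → ℝ → ℝ}, (∀ n, CM Lam n f) → ∀ t r, 0 < r → 0 ≤ Abel (f t) r := by
    intro f hf t r hr
    rw [abel_eq _ hr]
    exact mul_nonneg zero_le_two (integral_nonneg fun y => (hf 0).nonneg t (Ssub_pos hr y))
  induction N generalizing f with
  | zero => exact ⟨hnn hf, fun r hr => continuous_of_discreteTopology⟩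
  | succ N ih =>
    have hf' : ∀ n, CM Lam n (fun t => D1 (f t)) := fun n => (hf (n + 1)).2.2.2
    have hdec' : Dec (fun t => D1 (f t)) := Dec.of_D1 (hf 1)
    have habs : ∀ {f : TT → ℝ → ℝ}, (∀ n, CM Lam n f) → Dec f → ∀ t r, 0 < r → ∃ B : ℝ, 0 ≤ B ∧
        ∀ s, r ≤ s → |f t s| ≤ B * Real.exp (-(3 / 4) * s) := by
      intro f hf hdec t r hr
      obtain ⟨B, hB0, hB⟩ := hdec t r hr
      exact ⟨B, hB0, fun s hs => by
        rw [abs_of_nonneg ((hf 0).nonneg t (hr.trans_le hs))]; exact hB s hs⟩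
    have hder : ∀ t r, 0 < r → HasDerivAt (Abel (f t)) (-(Real.sinh r * Abel (D1 (f t)) r)) r := by
      intro t r hr
      obtain ⟨B, hB0, hB⟩ := habs hf hdec t r hr
      obtain ⟨B', hB0', hB'⟩ := habs hf' hdec' t (r / 2) (by linarith)
      exact abel_hasDerivAt (fun r hr => (hf 1).2.1 t r hr)
        (fun r hr => ((hf' 1).2.1 t r hr).continuousAt) hr hB0 hB0' hB hB'
    obtain ⟨C, hC0, hC⟩ := (hf 1).2.2.1
    refine ⟨⟨hnn hf, fun r hr => continuous_of_discreteTopology⟩,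
      fun t r hr => (hder t r hr).differentiableAt, ⟨C, hC0, fun t r hr => ?_⟩,
      (ih hf' hdec').congr fun t r hr => (D1_eq_of_hasDerivAt hr (hder t r hr)).symm⟩
    rw [D1_eq_of_hasDerivAt hr (hder t r hr)]
    change Abel (D1 (f t)) r ≤ C * Lam t r * Abel (f t) r
    rw [abel_eq _ hr, abel_eq _ hr]
    obtain ⟨B, hB0, hB⟩ := habs hf hdec t r hr
    obtain ⟨B', hB0', hB'⟩ := habs hf' hdec' t r hr
    have i1 := integrable_Ssub (fun r hr => ((hf' 1).2.1 t r hr).continuousAt) hr hB' hB0'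
    have i2 := integrable_Ssub (fun r hr => ((hf 1).2.1 t r hr).continuousAt) hr hB hB0
    have : ∫ y in Set.Ioi (0 : ℝ), D1 (f t) (Ssub r y) ≤
        C * Lam t r * ∫ y in Set.Ioi (0 : ℝ), f t (Ssub r y) := by
      rw [← integral_const_mul]
      refine integral_mono i1 (i2.const_mul _) fun y => ?_
      have hS := Ssub_pos hr y
      refine (hC t _ hS).trans ?_
      have h1 := (hf 0).nonneg t hS
      have h2 := Lam_anti t hr (le_Ssub hr y)
      show C * Lam t (Ssub r y) * f t (Ssub r y) ≤ C * Lam t r * f t (Ssub r y)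
      gcongr
    linarith

/-- The heat kernel as a family indexed by time is completely monotone to all orders. -/
lemma CM_heat (μ ν N : ℕ) (hν : 1 ≤ ν) : CM Lam N (fun t => heat μ ν t.val) := by
  have hcc : 0 ≤ cc μ ν 0 := by unfold cc; positivity
  by_cases hev : Even ν
  · refine (CM.smul Lam_nonneg (c := fun t : TT => cc μ ν 0 * t.val ^ (-(1 : ℝ) / 2) *
      Real.exp (-(Qc μ ν) ^ 2 * t.val / 4)) (fun t => ?_) continuous_of_discreteTopology
      (CM_Gpq (μ / 2) (ν / 2) N)).congr fun t r hr => ?_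
    · have := t.pos; positivity
    · simp only [heat, if_pos hev, Gpq]
  · obtain ⟨m, hm⟩ : ∃ m, (ν + 1) / 2 = m + 1 := ⟨(ν + 1) / 2 - 1, by omega⟩
    have hdec : Dec (Gpq (μ / 2) (m + 1)) := by
      have := Dec.of_D1 (CM_Gpq (μ / 2) m 1)
      intro t r hr
      obtain ⟨B, hB0, hB⟩ := this t r hr
      refine ⟨B, hB0, fun s hs => ?_⟩
      rw [Gpq, Function.iterate_succ_apply']
      exact hB s hs
    refine (CM.smul Lam_nonneg (c := fun t : TT => cc μ ν 0 * Real.pi ^ (-(1 : ℝ) / 2) *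
      t.val ^ (-(1 : ℝ) / 2) *
      Real.exp (-(Qc μ ν) ^ 2 * t.val / 4)) (fun t => ?_) continuous_of_discreteTopology
      (CM.abel (N := N) (fun n => CM_Gpq (μ / 2) (m + 1) n) hdec)).congr fun t r hr => ?_
    · have := t.pos; positivity
    · simp only [heat, if_neg hev, Gpq, Abel, hm]

/-! ### Iterated derivatives of a radial family -/

/-- `Psi` is submultiplicative in its order; two odd orders combine through
`r (1 + 1/t) ≤ 1 + 1/√t + r/t`, valid for `r ≤ 1`. -/
lemma Psi_mul_le {r t : ℝ} (hr : 0 < r) (ht : 0 < t) (a b : ℕ) :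
    Psi a r t * Psi b r t ≤ Psi (a + b) r t := by
  have hs : 0 < 1 / Real.sqrt t := by positivity
  have hrt : 0 < r / t := by positivity
  have h1t : 0 < 1 / t := by positivity
  unfold Psi
  set W := 1 + 1 / Real.sqrt t + r / t with hW
  have hW0 : 0 < W := by positivity
  by_cases h1 : 1 < r
  · simp [h1, pow_add]
  have hr1 : r ≤ 1 := not_lt.mp h1
  have key : r * (1 + 1 / t) ≤ W := by
    have : r * (1 + 1 / t) = r + r / t := by ring
    rw [this, hW]; linarith
  rcases Nat.even_or_odd a with ha | ha <;> rcases Nat.even_or_odd b with hb | hb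
  · have := ha.add hb
    simp [ha, hb, this, pow_add]
  · have h2 := Nat.not_even_iff_odd.mpr hb
    have h3 := Nat.not_even_iff_odd.mpr (ha.add_odd hb)
    obtain ⟨m, rfl⟩ := hb
    simp only [h1, ha, h2, h3, or_false, or_true, if_true, if_false]
    have e : a + (2 * m + 1) - 1 = a + 2 * m := by omega
    rw [e, Nat.add_sub_cancel, pow_add]
    exact le_of_eq (by ring)
  · have h2 := Nat.not_even_iff_odd.mpr ha
    have h3 := Nat.not_even_iff_odd.mpr (ha.add_even hb)
    obtain ⟨m, rfl⟩ := ha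
    simp only [h1, hb, h2, h3, or_false, or_true, if_true, if_false]
    have e : 2 * m + 1 + b - 1 = 2 * m + b := by omega
    rw [e, Nat.add_sub_cancel, pow_add]
    exact le_of_eq (by ring)
  · have h2 := Nat.not_even_iff_odd.mpr ha
    have h3 := Nat.not_even_iff_odd.mpr hb
    have h4 := ha.add_odd hb
    obtain ⟨m, rfl⟩ := ha
    obtain ⟨n, rfl⟩ := hb
    simp only [h1, h2, h3, h4, or_false, or_true, if_true, if_false]
    rw [Nat.add_sub_cancel, Nat.add_sub_cancel]
    calc r * W ^ (2 * m) * (1 + 1 / t) * (r * W ^ (2 * n) * (1 + 1 / t))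
        = W ^ (2 * m) * W ^ (2 * n) * (r * (1 + 1 / t)) ^ 2 := by ring
      _ ≤ W ^ (2 * m) * W ^ (2 * n) * W ^ 2 := by gcongr
      _ = W ^ (2 * m + 1 + (2 * n + 1)) := by ring

lemma Psi_nonneg {r t : ℝ} (hr : 0 < r) (ht : 0 < t) (a : ℕ) : 0 ≤ Psi a r t := by
  unfold Psi; split_ifs <;> positivity

lemma sinh_le_mul_exp (r : ℝ) : Real.sinh r ≤ r * Real.exp r := by
  have h1 := Real.add_one_le_exp (-(2 * r))
  have h2 : Real.exp (-r) = Real.exp r * Real.exp (-(2 * r)) := by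
    rw [← Real.exp_add]; ring_nf
  rw [Real.sinh_eq, h2]
  nlinarith [Real.exp_pos r]

lemma cosh_half_sq_le (r : ℝ) (hr : 0 < r) : Real.cosh (r / 2) ^ 2 ≤ Real.exp r := by
  have h1 : Real.cosh (r / 2) ≤ Real.exp (r / 2) := by
    rw [← Real.cosh_add_sinh]
    linarith [Real.sinh_pos_iff.mpr (show 0 < r / 2 by linarith)]
  have h2 : Real.exp r = Real.exp (r / 2) ^ 2 := by
    rw [← Real.exp_nat_mul]; congr 1; push_cast; ring
  rw [h2]
  exact pow_le_pow_left₀ (Real.cosh_pos _).le h1 2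

/-- With `u = cosh²(r/2)`, a quantity of size `u` (or, at odd order, of size
`√(u(u-1)) = sinh r / 2`) times the weight `Lam` is controlled by `Psi i`. -/
lemma mul_Lam_le_Psi {i : ℕ} (hi : 1 ≤ i) {c : ℝ} (hc : 0 ≤ c) (t : TT) {r U : ℝ} (hr : 0 < r)
    (heven : |U| ≤ c * Real.cosh (r / 2) ^ 2)
    (hodd : Odd i → |U| ≤ c * Real.sinh r) :
    |U| * Lam t r ≤ 2 * c * Psi i r t.val := by
  have ht := t.pos
  have hs : 0 < 1 / Real.sqrt t.val := by positivity
  have hrt : 0 < r / t.val := by positivity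
  have h1t : 0 < 1 / t.val := by positivity
  have hee : Real.exp r * Real.exp (-r) = 1 := by rw [← Real.exp_add]; simp
  have hq : (1 + r) / t.val = 1 / t.val + r / t.val := by ring
  have hLam : Lam t r = (1 + (1 / t.val + r / t.val)) * Real.exp (-r) := by rw [Lam, hq]
  have hpos : 0 < 1 + (1 / t.val + r / t.val) := by positivity
  have base : |U| * Lam t r ≤ c * (1 + (1 / t.val + r / t.val)) := by
    calc |U| * Lam t r ≤ (c * Real.exp r) * Lam t r := by
          refine mul_le_mul_of_nonneg_right (heven.trans ?_) (Lam_nonneg t r hr)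
          exact mul_le_mul_of_nonneg_left (cosh_half_sq_le r hr) hc
      _ = c * (1 + (1 / t.val + r / t.val)) * (Real.exp r * Real.exp (-r)) := by rw [hLam]; ring
      _ = _ := by rw [hee, mul_one]
  unfold Psi
  set W := 1 + 1 / Real.sqrt t.val + r / t.val with hW
  have hW1 : 1 ≤ W := by rw [hW]; linarith
  by_cases h1 : 1 < r
  · rw [if_pos (Or.inl h1)]
    have h2 : 1 / t.val ≤ r / t.val := by gcongr
    have h3 : 1 + (1 / t.val + r / t.val) ≤ 2 * W := by rw [hW]; linarith
    have h4 : W ≤ W ^ i := le_self_pow₀ hW1 (by omega)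
    calc _ ≤ c * (1 + (1 / t.val + r / t.val)) := base
      _ ≤ c * (2 * W ^ i) := by gcongr; linarith
      _ = _ := by ring
  have hr1 : r ≤ 1 := not_lt.mp h1
  have h2 : r / t.val ≤ 1 / t.val := by gcongr
  rcases Nat.even_or_odd i with he | ho
  · rw [if_pos (Or.inr he)]
    have hi2 : 2 ≤ i := by
      obtain ⟨m, rfl⟩ := he; omega
    have hsq : (1 / Real.sqrt t.val) ^ 2 = 1 / t.val := by
      rw [div_pow, Real.sq_sqrt ht.le, one_pow]
    have h3 : 1 + 1 / t.val ≤ W ^ 2 := by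
      rw [hW, ← hsq]; nlinarith
    have h4 : W ^ 2 ≤ W ^ i := pow_le_pow_right₀ hW1 hi2
    calc _ ≤ c * (1 + (1 / t.val + r / t.val)) := base
      _ ≤ c * (2 * W ^ i) := by gcongr; linarith
      _ = _ := by ring
  · rw [if_neg (by simp [h1, Nat.not_even_iff_odd.mpr ho])]
    have h5 : 1 ≤ W ^ (i - 1) := one_le_pow₀ hW1
    have hcr : 0 ≤ c * r := by positivity
    calc |U| * Lam t r ≤ (c * (r * Real.exp r)) * Lam t r := by
          refine mul_le_mul_of_nonneg_right ((hodd ho).trans ?_) (Lam_nonneg t r hr)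
          exact mul_le_mul_of_nonneg_left (sinh_le_mul_exp r) hc
      _ = c * r * (1 + (1 / t.val + r / t.val)) * (Real.exp r * Real.exp (-r)) := by
          rw [hLam]; ring
      _ = c * r * (1 + (1 / t.val + r / t.val)) := by rw [hee, mul_one]
      _ ≤ c * r * (2 * (W ^ (i - 1) * (1 + 1 / t.val))) := by
          gcongr
          nlinarith
      _ = _ := by ring

section

variable {E : Type} [NormedAddCommGroup E] [NormedSpace ℝ E]

/-- `DD V p f d`: the function `f` is differentiable at `p`, with derivative `d` in the
direction `V p`. -/
def DD (V : E → E) (p : E) (f : E → ℝ) (d : ℝ) : Prop :=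
  ∃ f' : E →L[ℝ] ℝ, HasFDerivAt f f' p ∧ f' (V p) = d

variable {V : E → E} {p : E} {f g : E → ℝ} {d e : ℝ}

lemma DD.congr_d (h : DD V p f d) (hd : d = e) : DD V p f e := hd ▸ h

lemma DD.congr_f (h : DD V p f d) (hf : g =ᶠ[𝓝 p] f) : DD V p g d := by
  obtain ⟨f', h1, h2⟩ := h
  exact ⟨f', h1.congr_of_eventuallyEq hf, h2⟩

lemma DD.const (c : ℝ) : DD V p (fun _ => c) 0 :=
  ⟨0, hasFDerivAt_const c p, rfl⟩

lemma DD.add (hf : DD V p f d) (hg : DD V p g e) : DD V p (fun q => f q + g q) (d + e) := by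
  obtain ⟨f', h1, h2⟩ := hf
  obtain ⟨g', h3, h4⟩ := hg
  exact ⟨f' + g', h1.add h3, by simp [h2, h4]⟩

lemma DD.mul (hf : DD V p f d) (hg : DD V p g e) :
    DD V p (fun q => f q * g q) (d * g p + f p * e) := by
  obtain ⟨f', h1, h2⟩ := hf
  obtain ⟨g', h3, h4⟩ := hg
  exact ⟨_, h1.mul h3, by simp [h2, h4]; ring⟩

lemma DD.smul (c : ℝ) (hf : DD V p f d) : DD V p (fun q => c * f q) (c * d) :=
  ((DD.const c).mul hf).congr_d (by ring)

lemma DD.comp {φ : ℝ → ℝ} {φ' : ℝ} (hφ : HasDerivAt φ φ' (f p)) (hf : DD V p f d) :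
    DD V p (fun q => φ (f q)) (φ' * d) := by
  obtain ⟨f', h1, h2⟩ := hf
  exact ⟨_, hφ.comp_hasFDerivAt p h1, by simp [h2]⟩

lemma DD.sq (hf : DD V p f d) : DD V p (fun q => f q ^ 2) (2 * f p * d) :=
  ((hf.mul hf).congr_f (.of_forall fun q => pow_two (f q))).congr_d (by ring)

lemma DD.inv (hf : DD V p f d) (h0 : f p ≠ 0) :
    DD V p (fun q => (f q)⁻¹) (-(f p ^ 2)⁻¹ * d) :=
  DD.comp (hasDerivAt_inv h0) hf

lemma DD.sum {κ : Type} (s : Finset κ) {f : κ → E → ℝ} {d : κ → ℝ}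
    (h : ∀ k ∈ s, DD V p (f k) (d k)) :
    DD V p (fun q => ∑ k ∈ s, f k q) (∑ k ∈ s, d k) := by
  classical
  induction s using Finset.induction_on with
  | empty => simpa using DD.const 0
  | insert a s ha ih =>
    simp only [Finset.sum_insert ha]
    exact (h a (by simp)).add (ih fun k hk => h k (by simp [hk]))

lemma DD.of_clm (L : E →L[ℝ] ℝ) : DD V p (fun q => L q) (L (V p)) :=
  ⟨L, L.hasFDerivAt, rfl⟩

lemma DD.differentiableAt (h : DD V p f d) : DifferentiableAt ℝ f p := by
  obtain ⟨f', h1, -⟩ := h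
  exact h1.differentiableAt

lemma DD.fderiv_eq (h : DD V p f d) : fderiv ℝ f p (V p) = d := by
  obtain ⟨f', h1, h2⟩ := h
  rw [h1.fderiv, h2]

lemma DD.unique (h : DD V p f d) (h' : DD V p f e) : d = e := by
  rw [← h.fderiv_eq, ← h'.fderiv_eq]

lemma DD_fderiv (h : DifferentiableAt ℝ f p) : DD V p f (fderiv ℝ f p (V p)) :=
  ⟨_, h.hasFDerivAt, rfl⟩

/-- The terms produced by differentiating `F t ∘ ρ` repeatedly along a vector field whose
successive derivatives of `cosh²(ρ/2)` are `U 1, U 2, …`. The first index is the number of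
derivatives, the sum of the orders `i` of the factors `U i`; the second is the number of
applications of `D1` to `F t` in excess of the number of these factors. -/
inductive Term (U : ℕ → E → ℝ) (ρ : E → ℝ) (F : TT → ℝ → ℝ) :
    ℕ → ℕ → (TT → E → ℝ) → Prop
  | base (n : ℕ) : Term U ρ F 0 n (fun t p => D1^[n] (F t) (ρ p))
  | mul {k n : ℕ} (i : ℕ) {f : TT → E → ℝ} : 1 ≤ i → Term U ρ F k (n + 1) f →
      Term U ρ F (k + i) n (fun t p => U i p * f t p)
  | sum {k n : ℕ} {f g : TT → E → ℝ} : Term U ρ F k n f → Term U ρ F k n g →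
      Term U ρ F k n (fun t p => f t p + g t p)
  | smul {k n : ℕ} (c : ℝ) {f : TT → E → ℝ} : Term U ρ F k n f →
      Term U ρ F k n (fun t p => c * f t p)

variable {U : ℕ → E → ℝ} {ρ : E → ℝ} {F : TT → ℝ → ℝ} {Ω : Set E}

/-- Chain rule: since `X (cosh²(ρ/2)) = (sinh ρ / 2) X ρ`, one has
`X (G ∘ ρ) = -2 (U 1) (D1 G) ∘ ρ`. -/
lemma DD_radial (hΩ : ∀ p ∈ Ω, Ω ∈ 𝓝 p) (hU : ∀ i, ∀ p ∈ Ω, DD V p (U i) (U (i + 1) p))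
    (hρ : ∀ p ∈ Ω, 0 < ρ p) (hρd : ∀ p ∈ Ω, DifferentiableAt ℝ ρ p)
    (hcosh : ∀ p ∈ Ω, Real.cosh (ρ p / 2) ^ 2 = U 0 p) {G : ℝ → ℝ}
    (hG : ∀ r, 0 < r → DifferentiableAt ℝ G r) {p : E} (hp : p ∈ Ω) :
    DD V p (fun q => G (ρ q)) (-2 * (U 1 p * D1 G (ρ p))) := by
  set δ := fderiv ℝ ρ p (V p)
  have h1 : DD V p ρ δ := DD_fderiv (hρd p hp)
  have hch : HasDerivAt (fun s => Real.cosh (s / 2) ^ 2)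
      (Real.cosh (ρ p / 2) * Real.sinh (ρ p / 2)) (ρ p) := by
    have := (((hasDerivAt_id (ρ p)).div_const 2).cosh).pow 2
    refine this.congr_deriv ?_
    simp
    ring
  have h2 : DD V p (U 0) (Real.cosh (ρ p / 2) * Real.sinh (ρ p / 2) * δ) :=
    (DD.comp hch h1).congr_f (by
      filter_upwards [hΩ p hp] with q hq using (hcosh q hq).symm)
  have h3 : Real.cosh (ρ p / 2) * Real.sinh (ρ p / 2) * δ = U 1 p := h2.unique (hU 0 p hp)
  have h4 : Real.sinh (ρ p) = 2 * Real.sinh (ρ p / 2) * Real.cosh (ρ p / 2) := by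
    rw [← Real.sinh_two_mul]; congr 1; ring
  have h5 : Real.sinh (ρ p) ≠ 0 := (Real.sinh_pos_iff.mpr (hρ p hp)).ne'
  refine (DD.comp (hG _ (hρ p hp)).hasDerivAt h1).congr_d ?_
  rw [← h3, D1]
  field_simp
  rw [h4]
  ring

/-- Differentiating a term raises the number of derivatives by one and keeps its excess of
`D1`: each `U 1` created by the chain rule comes with one more `D1`. -/
lemma Term.deriv (hΩ : ∀ p ∈ Ω, Ω ∈ 𝓝 p) (hU : ∀ i, ∀ p ∈ Ω, DD V p (U i) (U (i + 1) p))
    (hρ : ∀ p ∈ Ω, 0 < ρ p) (hρd : ∀ p ∈ Ω, DifferentiableAt ℝ ρ p)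
    (hcosh : ∀ p ∈ Ω, Real.cosh (ρ p / 2) ^ 2 = U 0 p) (hF : ∀ N, CM Lam N F)
    {k n : ℕ} {f : TT → E → ℝ} (h : Term U ρ F k n f) :
    ∃ f', Term U ρ F (k + 1) n f' ∧ ∀ t, ∀ p ∈ Ω, DD V p (f t) (f' t p) := by
  induction h with
  | base n =>
    refine ⟨_, Term.smul (-2) (Term.mul 1 le_rfl (Term.base (n + 1))), fun t p hp => ?_⟩
    have := DD_radial hΩ hU hρ hρd hcosh (fun r hr => (CM.iterate hF n 1).2.1 t r hr) hp
    rw [Function.iterate_succ_apply']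
    exact this
  | @mul k n i f hi h ih =>
    obtain ⟨f', hf', hd⟩ := ih
    have h1 := Term.mul (i + 1) (by omega) h
    have h2 := Term.mul i hi hf'
    rw [show k + 1 + i = k + i + 1 by ring] at h2
    exact ⟨_, Term.sum h1 h2, fun t p hp => (hU i p hp).mul (hd t p hp)⟩
  | sum _ _ ih1 ih2 =>
    obtain ⟨f', hf', hd⟩ := ih1
    obtain ⟨g', hg', he⟩ := ih2
    exact ⟨_, Term.sum hf' hg', fun t p hp => (hd t p hp).add (he t p hp)⟩
  | smul c _ ih =>
    obtain ⟨f', hf', hd⟩ := ih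
    exact ⟨_, Term.smul c hf', fun t p hp => (hd t p hp).smul c⟩

/-- Each factor `U i` absorbs one weight `Lam` and contributes `Psi i`; the contributions combine
by submultiplicativity. -/
lemma Term.bound (hρ : ∀ p ∈ Ω, 0 < ρ p) (hF : ∀ N, CM Lam N F) {K : ℕ → ℝ}
    (hK : ∀ i, 1 ≤ i → ∀ t : TT, ∀ p ∈ Ω, |U i p| * Lam t (ρ p) ≤ K i * Psi i (ρ p) t.val)
    (hK0 : ∀ i, 0 ≤ K i)
    {k n : ℕ} {f : TT → E → ℝ} (h : Term U ρ F k n f) :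
    ∃ C : ℝ, 0 ≤ C ∧ ∀ t, ∀ p ∈ Ω,
      |f t p| ≤ C * Psi k (ρ p) t.val * (Lam t (ρ p) ^ n * F t (ρ p)) := by
  induction h with
  | base n =>
    obtain ⟨C, hC0, hC⟩ := CM.iterate_le Lam_nonneg hF n
    refine ⟨C, hC0, fun t p hp => ?_⟩
    rw [abs_of_nonneg ((CM.iterate hF n 0).nonneg t (hρ p hp))]
    refine (hC t _ (hρ p hp)).trans (le_of_eq ?_)
    simp [Psi]
    ring
  | @mul k n i f hi h ih =>
    obtain ⟨C, hC0, hC⟩ := ih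
    refine ⟨C * K i, mul_nonneg hC0 (hK0 i), fun t p hp => ?_⟩
    have hF0 := (hF 0).nonneg t (hρ p hp)
    have hL := Lam_nonneg t _ (hρ p hp)
    have hP := Psi_nonneg (hρ p hp) t.pos k
    have hPi := Psi_nonneg (hρ p hp) t.pos i
    have := Psi_mul_le (hρ p hp) t.pos k i
    have hKi := hK0 i
    rw [abs_mul]
    calc |U i p| * |f t p|
        ≤ |U i p| * (C * Psi k (ρ p) t.val * (Lam t (ρ p) ^ (n + 1) * F t (ρ p))) := by
          gcongr; exact hC t p hp
      _ = C * Psi k (ρ p) t.val * (Lam t (ρ p) ^ n * F t (ρ p)) * (|U i p| * Lam t (ρ p)) := by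
          ring
      _ ≤ C * Psi k (ρ p) t.val * (Lam t (ρ p) ^ n * F t (ρ p)) *
            (K i * Psi i (ρ p) t.val) := by
          exact mul_le_mul_of_nonneg_left (hK i hi t p hp) (by positivity)
      _ = C * K i * (Psi k (ρ p) t.val * Psi i (ρ p) t.val) *
            (Lam t (ρ p) ^ n * F t (ρ p)) := by ring
      _ ≤ C * K i * Psi (k + i) (ρ p) t.val * (Lam t (ρ p) ^ n * F t (ρ p)) := by gcongr
  | sum _ _ ih1 ih2 =>
    obtain ⟨C, hC0, hC⟩ := ih1
    obtain ⟨C', hC0', hC'⟩ := ih2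
    refine ⟨C + C', by positivity, fun t p hp => ?_⟩
    refine (abs_add_le _ _).trans ((add_le_add (hC t p hp) (hC' t p hp)).trans (le_of_eq ?_))
    ring
  | smul c _ ih =>
    obtain ⟨C, hC0, hC⟩ := ih
    refine ⟨|c| * C, by positivity, fun t p hp => ?_⟩
    rw [abs_mul]
    refine (mul_le_mul_of_nonneg_left (hC t p hp) (abs_nonneg c)).trans (le_of_eq ?_)
    ring

/-- The bound on iterated derivatives of a radial family along a first-order operator `X`,
given the sequence `U i = X^i (cosh²(ρ/2))` and its size. -/
theorem iterate_bound (X : (E → ℝ) → E → ℝ)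
    (hX : ∀ f, ∀ p ∈ Ω, DifferentiableAt ℝ f p → X f p = fderiv ℝ f p (V p))
    (hΩ : ∀ p ∈ Ω, Ω ∈ 𝓝 p) (hU : ∀ i, ∀ p ∈ Ω, DD V p (U i) (U (i + 1) p))
    (hρ : ∀ p ∈ Ω, 0 < ρ p) (hρd : ∀ p ∈ Ω, DifferentiableAt ℝ ρ p)
    (hcosh : ∀ p ∈ Ω, Real.cosh (ρ p / 2) ^ 2 = U 0 p) (hF : ∀ N, CM Lam N F)
    (heven : ∀ i, Even i → ∃ c : ℝ, 0 ≤ c ∧ ∀ p ∈ Ω, |U i p| ≤ c * U 0 p)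
    (hodd : ∀ i, Odd i → ∃ c : ℝ, 0 ≤ c ∧ ∀ p ∈ Ω, U i p ^ 2 ≤ c * (U 0 p * (U 0 p - 1)))
    (k : ℕ) :
    ∃ C : ℝ, 0 < C ∧ ∀ t, ∀ p ∈ Ω, |X^[k] (fun q => F t (ρ q)) p| ≤
      C * Psi k (ρ p) t.val * F t (ρ p) := by
  have hK : ∀ i, ∃ K : ℝ, 0 ≤ K ∧ (1 ≤ i → ∀ t : TT, ∀ p ∈ Ω,
      |U i p| * Lam t (ρ p) ≤ K * Psi i (ρ p) t.val) := by
    intro i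
    rcases Nat.even_or_odd i with he | ho
    · obtain ⟨c, hc0, hc⟩ := heven i he
      refine ⟨2 * c, by positivity, fun hi t p hp => ?_⟩
      refine mul_Lam_le_Psi hi hc0 t (hρ p hp) (hcosh p hp ▸ hc p hp) fun ho => ?_
      exact absurd he (Nat.not_even_iff_odd.mpr ho)
    · obtain ⟨c, hc0, hc⟩ := hodd i ho
      refine ⟨2 * Real.sqrt c, by positivity, fun hi t p hp => ?_⟩
      have hr := hρ p hp
      have h4 : Real.sinh (ρ p) = 2 * Real.sinh (ρ p / 2) * Real.cosh (ρ p / 2) := by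
        rw [← Real.sinh_two_mul]; congr 1; ring
      have h6 := Real.cosh_sq (ρ p / 2)
      have hsc := Real.sq_sqrt hc0
      have hs0 := Real.sqrt_nonneg c
      have hsh : 0 < Real.sinh (ρ p / 2) := Real.sinh_pos_iff.mpr (by linarith)
      have hch := Real.cosh_pos (ρ p / 2)
      have h7 : |U i p| ≤ Real.sqrt c * (Real.sinh (ρ p / 2) * Real.cosh (ρ p / 2)) := by
        refine abs_le_of_sq_le_sq ?_ (by positivity)
        refine (hc p hp).trans (le_of_eq ?_)
        rw [← hcosh p hp, mul_pow, hsc, mul_pow]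
        have : Real.sinh (ρ p / 2) ^ 2 = Real.cosh (ρ p / 2) ^ 2 - 1 := by linarith
        rw [this]; ring
      refine mul_Lam_le_Psi hi hs0 t hr (h7.trans ?_) fun _ => h7.trans ?_
      · rw [sq]; gcongr; exact (Real.sinh_lt_cosh _).le
      · rw [h4]; gcongr; nlinarith [mul_pos hsh hch]
  choose K hK0 hK using hK
  have rep : ∀ k, ∃ f, Term U ρ F k 0 f ∧
      ∀ t, ∀ p ∈ Ω, X^[k] (fun q => F t (ρ q)) p = f t p := by
    intro k
    induction k with
    | zero => exact ⟨_, Term.base 0, fun t p _ => rfl⟩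
    | succ k ih =>
      obtain ⟨f, hf, hfe⟩ := ih
      obtain ⟨f', hf', hd⟩ := hf.deriv hΩ hU hρ hρd hcosh hF
      refine ⟨f', hf', fun t p hp => ?_⟩
      have h1 : DD V p (X^[k] (fun q => F t (ρ q))) (f' t p) :=
        (hd t p hp).congr_f (by filter_upwards [hΩ p hp] with q hq using hfe t q hq)
      rw [Function.iterate_succ_apply', hX _ p hp h1.differentiableAt, h1.fderiv_eq]
  obtain ⟨f, hf, hfe⟩ := rep k
  obtain ⟨C, hC0, hC⟩ := hf.bound hρ hF (fun i hi => hK i hi) hK0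
  refine ⟨C + 1, by linarith, fun t p hp => ?_⟩
  rw [hfe t p hp]
  refine (hC t p hp).trans ?_
  have hF0 := (hF 0).nonneg t (hρ p hp)
  have hP := Psi_nonneg (hρ p hp) t.pos k
  rw [pow_zero, one_mul]
  gcongr
  linarith

end

/-! ### The function `cosh²(r/2)` -/

section

variable {μ ν : ℕ}

/-- `|x|²`. -/
def Nx (p : Pt μ ν) : ℝ := ∑ i, p.1 i ^ 2

/-- `|z|²`. -/
def Mz (p : Pt μ ν) : ℝ := ∑ k, p.2.1 k ^ 2

/-- `1/2 + |x|²/8`. -/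
def Bx (p : Pt μ ν) : ℝ := 1 / 2 + Nx p / 8

/-- The rational form `a/4 + B + (B² + |z|²/4)/a` of `cosh²(r/2)`, with `B = 1/2 + |x|²/8`. -/
def uu (p : Pt μ ν) : ℝ := p.2.2 * (1 / 4) + Bx p + (Bx p ^ 2 + Mz p * (1 / 4)) * p.2.2⁻¹

lemma Nx_nonneg (p : Pt μ ν) : 0 ≤ Nx p := Finset.sum_nonneg fun _ _ => sq_nonneg _

lemma Mz_nonneg (p : Pt μ ν) : 0 ≤ Mz p := Finset.sum_nonneg fun _ _ => sq_nonneg _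

lemma coshExpr_eq_uu {p : Pt μ ν} (ha : 0 < p.2.2) : coshExpr μ ν p = uu p := by
  have hs : 0 < Real.sqrt p.2.2 := Real.sqrt_pos.mpr ha
  have h2 := Real.sq_sqrt ha.le
  have e1 : (∑ i, p.1 i ^ 2) = Nx p := rfl
  have e2 : (∑ i, p.2.1 i ^ 2) = Mz p := rfl
  unfold coshExpr uu Bx
  rw [e1, e2]
  set s := Real.sqrt p.2.2
  rw [← h2]
  field_simp
  ring

lemma uu_mul {p : Pt μ ν} (ha : 0 < p.2.2) :
    uu p * p.2.2 = (p.2.2 / 2 + Bx p) ^ 2 + Mz p / 4 := by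
  unfold uu
  field_simp
  ring

lemma quarter_le_uu {p : Pt μ ν} (ha : 0 < p.2.2) : p.2.2 / 4 ≤ uu p := by
  have hN := Nx_nonneg p
  have hM := Mz_nonneg p
  have hB : 0 < Bx p := by unfold Bx; positivity
  have : 0 < p.2.2⁻¹ := by positivity
  have : 0 ≤ (Bx p ^ 2 + Mz p * (1 / 4)) * p.2.2⁻¹ := by positivity
  unfold uu
  linarith

/-- The inequality of means applied to `a/4 + B²/a ≥ B`. -/
lemma le_uu {p : Pt μ ν} (ha : 0 < p.2.2) : 1 + Nx p / 4 + Mz p / 4 * p.2.2⁻¹ ≤ uu p := by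
  have h : p.2.2 * (1 / 4) + Bx p ^ 2 * p.2.2⁻¹ - Bx p =
      (p.2.2 / 2 - Bx p) ^ 2 * p.2.2⁻¹ := by
    field_simp
    ring
  have h2 : 0 ≤ (p.2.2 / 2 - Bx p) ^ 2 * p.2.2⁻¹ := by positivity
  have h3 : 1 + Nx p / 4 = 2 * Bx p := by unfold Bx; ring
  have h4 : uu p = p.2.2 * (1 / 4) + Bx p ^ 2 * p.2.2⁻¹ + Bx p + Mz p / 4 * p.2.2⁻¹ := by
    unfold uu; ring
  rw [h3, h4]
  linarith

lemma Nx_le {p : Pt μ ν} (ha : 0 < p.2.2) : Nx p ≤ 4 * (uu p - 1) := by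
  have h1 := le_uu ha
  have h2 := Mz_nonneg p
  have : 0 ≤ Mz p / 4 * p.2.2⁻¹ := by positivity
  linarith

lemma one_le_uu {p : Pt μ ν} (ha : 0 < p.2.2) : 1 ≤ uu p := by
  linarith [Nx_le ha, Nx_nonneg p]

lemma Mz_le {p : Pt μ ν} (ha : 0 < p.2.2) : Mz p ≤ 16 * (uu p * (uu p - 1)) := by
  have h1 := le_uu ha
  have h2 := Nx_nonneg p
  have h3 := quarter_le_uu ha
  have h4 : Mz p / 4 * p.2.2⁻¹ ≤ uu p - 1 := by linarith
  have h5 : 0 ≤ Mz p / 4 * p.2.2⁻¹ := by have := Mz_nonneg p; positivity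
  have h6 : Mz p = 16 * (p.2.2 / 4 * (Mz p / 4 * p.2.2⁻¹)) := by field_simp; norm_num
  rw [h6]
  have := one_le_uu ha
  gcongr

lemma DD_x {V : Pt μ ν → Pt μ ν} (p : Pt μ ν) (i : Fin μ) :
    DD V p (fun q => q.1 i) ((V p).1 i) :=
  DD.of_clm ((ContinuousLinearMap.proj (R := ℝ) (φ := fun _ : Fin μ => ℝ) i).comp
    (ContinuousLinearMap.fst ℝ (Fin μ → ℝ) ((Fin ν → ℝ) × ℝ)))

lemma DD_z {V : Pt μ ν → Pt μ ν} (p : Pt μ ν) (i : Fin ν) :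
    DD V p (fun q => q.2.1 i) ((V p).2.1 i) :=
  DD.of_clm ((ContinuousLinearMap.proj (R := ℝ) (φ := fun _ : Fin ν => ℝ) i).comp
    ((ContinuousLinearMap.fst ℝ (Fin ν → ℝ) ℝ).comp
      (ContinuousLinearMap.snd ℝ (Fin μ → ℝ) ((Fin ν → ℝ) × ℝ))))

lemma DD_a {V : Pt μ ν → Pt μ ν} (p : Pt μ ν) : DD V p (fun q => q.2.2) ((V p).2.2) :=
  DD.of_clm ((ContinuousLinearMap.snd ℝ (Fin ν → ℝ) ℝ).comp
      (ContinuousLinearMap.snd ℝ (Fin μ → ℝ) ((Fin ν → ℝ) × ℝ)))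

lemma DD_Nx {V : Pt μ ν → Pt μ ν} (p : Pt μ ν) :
    DD V p Nx (∑ i, 2 * p.1 i * (V p).1 i) :=
  DD.sum Finset.univ fun i _ => (DD_x p i).sq

lemma DD_Mz {V : Pt μ ν → Pt μ ν} (p : Pt μ ν) :
    DD V p Mz (∑ k, 2 * p.2.1 k * (V p).2.1 k) :=
  DD.sum Finset.univ fun k _ => (DD_z p k).sq

lemma DD_Bx {V : Pt μ ν → Pt μ ν} (p : Pt μ ν) {n : ℝ} (hN : DD V p Nx n) :
    DD V p Bx (n / 8) :=
  (((DD.const (1 / 2)).add (hN.smul (1 / 8))).congr_f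
    (.of_forall fun q => by simp only [Bx]; ring)).congr_d (by ring)

lemma DD_inv_a {V : Pt μ ν → Pt μ ν} {p : Pt μ ν} (ha : 0 < p.2.2) :
    DD V p (fun q => q.2.2⁻¹) (-(p.2.2 ^ 2)⁻¹ * (V p).2.2) :=
  (DD_a p).inv ha.ne'

lemma DD_uu {V : Pt μ ν → Pt μ ν} {p : Pt μ ν} (ha : 0 < p.2.2) {n m : ℝ}
    (hN : DD V p Nx n) (hM : DD V p Mz m) :
    DD V p uu ((V p).2.2 * (1 / 4) + n / 8 + ((2 * Bx p * (n / 8) + m * (1 / 4)) * p.2.2⁻¹ +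
      (Bx p ^ 2 + Mz p * (1 / 4)) * (-(p.2.2 ^ 2)⁻¹ * (V p).2.2))) := by
  have hB := DD_Bx p hN
  have h1 := (DD_a (V := V) p).mul (DD.const (1 / 4))
  have h2 := hB.sq.add (hM.mul (DD.const (1 / 4)))
  have h3 := (h1.add hB).add (h2.mul (DD_inv_a ha))
  refine h3.congr_d ?_
  ring

/-! ### The vector fields as directional derivatives -/

/-- The direction `(0, 0, a)` of `X_0`. -/
def V0 (p : Pt μ ν) : Pt μ ν := (0, 0, p.2.2)

/-- The direction `√a (e_ℓ, (J_k x, e_ℓ)/2, 0)` of `X_ℓ`, `1 ≤ ℓ ≤ μ`. -/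
def V1 (Jm : Fin ν → Matrix (Fin μ) (Fin μ) ℝ) (l : Fin μ) (p : Pt μ ν) : Pt μ ν :=
  (Pi.single l (Real.sqrt p.2.2), fun k => Real.sqrt p.2.2 / 2 * (Jm k).mulVec p.1 l, 0)

/-- The direction `(0, a e_k, 0)` of `X_{μ+k}`. -/
def V2 (k : Fin ν) (p : Pt μ ν) : Pt μ ν := (0, Pi.single k p.2.2, 0)

lemma deriv_slice {f : Pt μ ν → ℝ} {p : Pt μ ν} (hf : DifferentiableAt ℝ f p)
    {γ : ℝ → Pt μ ν} {γ' : Pt μ ν} {s : ℝ} (hs : γ s = p) (hγ : HasDerivAt γ γ' s) :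
    deriv (fun σ => f (γ σ)) s = fderiv ℝ f p γ' := by
  have h := hf.hasFDerivAt
  rw [← hs] at h ⊢
  exact (h.comp_hasDerivAt s hγ).deriv

lemma deriv_slice_a {f : Pt μ ν → ℝ} {p : Pt μ ν} (hf : DifferentiableAt ℝ f p) :
    deriv (fun s => f (p.1, p.2.1, s)) p.2.2 = fderiv ℝ f p (0, 0, 1) :=
  deriv_slice hf rfl ((hasDerivAt_const _ _).prodMk
    ((hasDerivAt_const _ _).prodMk (hasDerivAt_id _)))

lemma deriv_slice_x {f : Pt μ ν → ℝ} {p : Pt μ ν} (hf : DifferentiableAt ℝ f p) (l : Fin μ) :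
    deriv (fun s => f (Function.update p.1 l s, p.2.1, p.2.2)) (p.1 l) =
      fderiv ℝ f p (Pi.single l 1, 0, 0) :=
  deriv_slice hf (by simp) ((hasDerivAt_update p.1 l (p.1 l)).prodMk
    ((hasDerivAt_const _ _).prodMk (hasDerivAt_const _ _)))

lemma deriv_slice_z {f : Pt μ ν → ℝ} {p : Pt μ ν} (hf : DifferentiableAt ℝ f p) (k : Fin ν) :
    deriv (fun s => f (p.1, Function.update p.2.1 k s, p.2.2)) (p.2.1 k) =
      fderiv ℝ f p (0, Pi.single k 1, 0) :=
  deriv_slice hf (by simp) ((hasDerivAt_const _ _).prodMk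
    ((hasDerivAt_update p.2.1 k (p.2.1 k)).prodMk (hasDerivAt_const _ _)))

lemma Xf_zero (Jm : Fin ν → Matrix (Fin μ) (Fin μ) ℝ) (j : Fin (μ + ν + 1)) (h0 : (j : ℕ) = 0)
    {f : Pt μ ν → ℝ} {p : Pt μ ν} (hf : DifferentiableAt ℝ f p) :
    Xf μ ν Jm j f p = fderiv ℝ f p (V0 p) := by
  have e : V0 p = p.2.2 • ((0, 0, 1) : Pt μ ν) := by simp [V0]
  rw [Xf, dif_pos h0, deriv_slice_a hf, e, map_smul, smul_eq_mul]

lemma Xf_x (Jm : Fin ν → Matrix (Fin μ) (Fin μ) ℝ) (j : Fin (μ + ν + 1)) (h0 : (j : ℕ) ≠ 0)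
    (hm : (j : ℕ) ≤ μ) {f : Pt μ ν → ℝ} {p : Pt μ ν} (hf : DifferentiableAt ℝ f p) :
    Xf μ ν Jm j f p = fderiv ℝ f p (V1 Jm ⟨(j : ℕ) - 1, by omega⟩ p) := by
  set l : Fin μ := ⟨(j : ℕ) - 1, by omega⟩ with hl
  have e : V1 Jm l p = Real.sqrt p.2.2 • (((Pi.single l 1, 0, 0) : Pt μ ν) +
      (1 / 2 : ℝ) • ∑ k, (Jm k).mulVec p.1 l • ((0, Pi.single k 1, 0) : Pt μ ν)) := by
    refine Prod.ext ?_ (Prod.ext ?_ ?_)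
    · ext i
      simp [V1, Prod.fst_sum, Pi.single_apply]
    · ext i
      simp [V1, Prod.fst_sum, Prod.snd_sum, Pi.single_apply]
      ring
    · simp [V1, Prod.snd_sum]
  rw [Xf, dif_neg h0, dif_pos hm, deriv_slice_x hf, e, map_smul, map_add, map_smul, map_sum]
  simp only [deriv_slice_z hf, map_smul, smul_eq_mul, hl]

lemma Xf_z (Jm : Fin ν → Matrix (Fin μ) (Fin μ) ℝ) (j : Fin (μ + ν + 1)) (h0 : (j : ℕ) ≠ 0)
    (hm : ¬ (j : ℕ) ≤ μ) {f : Pt μ ν → ℝ} {p : Pt μ ν} (hf : DifferentiableAt ℝ f p) :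
    Xf μ ν Jm j f p =
      fderiv ℝ f p (V2 ⟨(j : ℕ) - μ - 1, by have := j.isLt; omega⟩ p) := by
  set k : Fin ν := ⟨(j : ℕ) - μ - 1, by have := j.isLt; omega⟩ with hk
  have e : V2 k p = p.2.2 • ((0, Pi.single k 1, 0) : Pt μ ν) := by
    refine Prod.ext ?_ (Prod.ext ?_ ?_)
    · simp [V2]
    · ext i
      simp [V2, Pi.single_apply]
    · simp [V2]
  rw [Xf, dif_neg h0, dif_neg hm, deriv_slice_z hf, e, map_smul, smul_eq_mul]

/-! ### Iterated derivatives of `cosh²(r/2)` along a single field -/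

/-- `X_0^i (cosh²(r/2))`. -/
def U0 (i : ℕ) (p : Pt μ ν) : ℝ :=
  p.2.2 * (1 / 4) + (if i = 0 then Bx p else 0) +
    (-1) ^ i * ((Bx p ^ 2 + Mz p * (1 / 4)) * p.2.2⁻¹)

lemma U0_zero (p : Pt μ ν) : U0 0 p = uu p := by simp [U0, uu]

lemma DD_U0 (i : ℕ) {p : Pt μ ν} (ha : 0 < p.2.2) : DD V0 p (U0 i) (U0 (i + 1) p) := by
  have hN : DD V0 p (Nx (μ := μ) (ν := ν)) 0 := (DD_Nx p).congr_d (by simp [V0])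
  have hM : DD V0 p (Mz (μ := μ) (ν := ν)) 0 := (DD_Mz p).congr_d (by simp [V0])
  have hB := DD_Bx p hN
  have h1 := (DD_a (V := V0) p).mul (DD.const (1 / 4))
  have h2 := (hB.sq.add (hM.mul (DD.const (1 / 4)))).mul (DD_inv_a ha)
  have h3 : DD V0 p (fun q : Pt μ ν => if i = 0 then Bx q else 0) 0 := by
    by_cases h : i = 0
    · simp only [h, if_true]; exact hB.congr_d (by simp)
    · simp only [h, if_false]; exact DD.const 0
  refine ((h1.add h3).add (h2.smul ((-1) ^ i))).congr_d ?_
  simp only [U0, V0, Nat.succ_ne_zero, if_false, pow_succ]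
  field_simp
  ring

lemma U0_even (i : ℕ) (hi : Even i) {p : Pt μ ν} (ha : 0 < p.2.2) : |U0 i p| ≤ 1 * uu p := by
  have hN := Nx_nonneg p
  have hM := Mz_nonneg p
  have hB : 0 < Bx p := by unfold Bx; positivity
  have : 0 < p.2.2⁻¹ := by positivity
  have h1 : 0 ≤ (Bx p ^ 2 + Mz p * (1 / 4)) * p.2.2⁻¹ := by positivity
  unfold U0 uu
  rw [hi.neg_one_pow]
  split_ifs
  · rw [abs_of_nonneg (by positivity)]; linarith
  · rw [abs_of_nonneg (by positivity)]; linarith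

/-- Here `X_0 u = a/4 - (B² + |z|²/4)/a` satisfies `(X_0 u)² = u² - 2uB - |z|²/4`, and `B ≥ 1/2`. -/
lemma U0_odd (i : ℕ) (hi : Odd i) {p : Pt μ ν} (ha : 0 < p.2.2) :
    U0 i p ^ 2 ≤ 1 * (uu p * (uu p - 1)) := by
  have h0 : i ≠ 0 := by rintro rfl; simp at hi
  have hu := one_le_uu ha
  have hM := Mz_nonneg p
  have hN := Nx_nonneg p
  have hB : 1 / 2 ≤ Bx p := by unfold Bx; linarith
  set D := (Bx p ^ 2 + Mz p * (1 / 4)) * p.2.2⁻¹ with hD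
  have hDa : p.2.2 * D = Bx p ^ 2 + Mz p * (1 / 4) := by rw [hD]; field_simp
  have e1 : U0 i p = p.2.2 * (1 / 4) - D := by
    simp only [U0, h0, if_false, hi.neg_one_pow]
    rw [hD]; ring
  have e2 : uu p = p.2.2 * (1 / 4) + Bx p + D := rfl
  rw [e1]
  have e3 : (p.2.2 * (1 / 4) - D) ^ 2 = uu p ^ 2 - 2 * uu p * Bx p - Mz p * (1 / 4) := by
    have : (p.2.2 * (1 / 4) - D) ^ 2 = (uu p - Bx p) ^ 2 - p.2.2 * D := by rw [e2]; ring
    rw [this, hDa]; ring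
  rw [e3]
  nlinarith

/-- `X_{μ+k}^i (cosh²(r/2))`. -/
def U2 (k : Fin ν) : ℕ → Pt μ ν → ℝ
  | 0 => uu
  | 1 => fun p => 1 / 2 * p.2.1 k
  | 2 => fun p => 1 / 2 * p.2.2
  | _ + 3 => fun _ => 0

lemma DD_U2 (k : Fin ν) (i : ℕ) {p : Pt μ ν} (ha : 0 < p.2.2) :
    DD (V2 k) p (U2 k i) (U2 k (i + 1) p) := by
  have hN : DD (V2 k) p (Nx (μ := μ) (ν := ν)) 0 := (DD_Nx p).congr_d (by simp [V2])
  have hM : DD (V2 k) p (Mz (μ := μ) (ν := ν)) (2 * p.2.1 k * p.2.2) :=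
    (DD_Mz p).congr_d (by simp [V2, Pi.single_apply])
  match i with
  | 0 =>
    refine (DD_uu ha hN hM).congr_d ?_
    simp only [U2, V2]
    field_simp
    ring
  | 1 => exact ((DD_z p k).smul (1 / 2)).congr_d (by simp [U2, V2])
  | 2 => exact ((DD_a p).smul (1 / 2)).congr_d (by simp [U2, V2])
  | i + 3 => exact DD.const 0

lemma U2_even (k : Fin ν) (i : ℕ) (hi : Even i) {p : Pt μ ν} (ha : 0 < p.2.2) :
    |U2 k i p| ≤ 2 * uu p := by
  have hu := one_le_uu ha
  have h1 := quarter_le_uu ha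
  match i with
  | 0 => simp only [U2]; rw [abs_of_nonneg (by linarith)]; linarith
  | 1 => simp at hi
  | 2 => simp only [U2]; rw [abs_of_nonneg (by positivity)]; linarith
  | i + 3 => simp only [U2]; rw [abs_zero]; linarith

lemma U2_odd (k : Fin ν) (i : ℕ) (hi : Odd i) {p : Pt μ ν} (ha : 0 < p.2.2) :
    U2 k i p ^ 2 ≤ 4 * (uu p * (uu p - 1)) := by
  have hu := one_le_uu ha
  have h1 := Mz_le ha
  have hz : p.2.1 k ^ 2 ≤ Mz p :=
    Finset.single_le_sum (f := fun k => p.2.1 k ^ 2) (fun _ _ => sq_nonneg _) (Finset.mem_univ k)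
  match i with
  | 0 => simp at hi
  | 1 => simp only [U2]; nlinarith
  | 2 => exact absurd hi (by decide)
  | i + 3 => simp only [U2]; nlinarith

/-- `(J_k x, e_ℓ)`. -/
def jx (Jm : Fin ν → Matrix (Fin μ) (Fin μ) ℝ) (l : Fin μ) (k : Fin ν) (p : Pt μ ν) : ℝ :=
  (Jm k).mulVec p.1 l

/-- `Σ_k z_k (J_k x, e_ℓ)`. -/
def Yl (Jm : Fin ν → Matrix (Fin μ) (Fin μ) ℝ) (l : Fin μ) (p : Pt μ ν) : ℝ :=
  ∑ k, p.2.1 k * jx Jm l k p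

/-- `Σ_k (J_k x, e_ℓ)²`. -/
def Zl (Jm : Fin ν → Matrix (Fin μ) (Fin μ) ℝ) (l : Fin μ) (p : Pt μ ν) : ℝ :=
  ∑ k, jx Jm l k p ^ 2

/-- `a/2 + 1/2 + |x|²/8`. -/
def Ea (p : Pt μ ν) : ℝ := p.2.2 * (1 / 2) + Bx p

/-- The sum of the squares of the entries of the `ℓ`-th rows of the `J_k`. -/
def kap (Jm : Fin ν → Matrix (Fin μ) (Fin μ) ℝ) (l : Fin μ) : ℝ := ∑ k, ∑ i, Jm k l i ^ 2

/-- `X_ℓ^i (cosh²(r/2))`, `1 ≤ ℓ ≤ μ`. -/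
def U1 (Jm : Fin ν → Matrix (Fin μ) (Fin μ) ℝ) (l : Fin μ) : ℕ → Pt μ ν → ℝ
  | 0 => uu
  | 1 => fun p => (1 / 2 * (Ea p * p.1 l) + 1 / 4 * Yl Jm l p) * (Real.sqrt p.2.2)⁻¹
  | 2 => fun p => 1 / 8 * p.1 l ^ 2 + 1 / 2 * Ea p + 1 / 8 * Zl Jm l p
  | 3 => fun p => 3 / 8 * (Real.sqrt p.2.2 * p.1 l)
  | 4 => fun p => 3 / 8 * p.2.2
  | _ + 5 => fun _ => 0

lemma kap_nonneg (Jm : Fin ν → Matrix (Fin μ) (Fin μ) ℝ) (l : Fin μ) : 0 ≤ kap Jm l :=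
  Finset.sum_nonneg fun _ _ => Finset.sum_nonneg fun _ _ => sq_nonneg _

lemma Zl_le (Jm : Fin ν → Matrix (Fin μ) (Fin μ) ℝ) (l : Fin μ) (p : Pt μ ν) :
    Zl Jm l p ≤ kap Jm l * Nx p := by
  unfold Zl kap
  rw [Finset.sum_mul]
  exact Finset.sum_le_sum fun k _ =>
    Finset.sum_mul_sq_le_sq_mul_sq Finset.univ (fun i => Jm k l i) fun i => p.1 i

lemma Yl_sq_le (Jm : Fin ν → Matrix (Fin μ) (Fin μ) ℝ) (l : Fin μ) (p : Pt μ ν) :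
    Yl Jm l p ^ 2 ≤ Mz p * Zl Jm l p := Finset.sum_mul_sq_le_sq_mul_sq _ _ _

lemma DD_sqrt_a (Jm : Fin ν → Matrix (Fin μ) (Fin μ) ℝ) (l : Fin μ) {p : Pt μ ν}
    (ha : 0 < p.2.2) : DD (V1 Jm l) p (fun q => Real.sqrt q.2.2) 0 :=
  (DD.comp (f := fun q : Pt μ ν => q.2.2) (Real.hasDerivAt_sqrt ha.ne') (DD_a p)).congr_d
    (by simp [V1])

/-- Skew-symmetry gives `(J_k)_{ℓℓ} = 0`, so `X_ℓ` annihilates `(J_k x, e_ℓ)`. -/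
lemma DD_jx (Jm : Fin ν → Matrix (Fin μ) (Fin μ) ℝ) (hskew : ∀ k, (Jm k).transpose = -(Jm k))
    (l : Fin μ) (k : Fin ν) (p : Pt μ ν) : DD (V1 Jm l) p (jx Jm l k) 0 := by
  have hd : Jm k l l = 0 := by
    have := congrFun (congrFun (hskew k) l) l
    simp only [Matrix.transpose_apply, Matrix.neg_apply] at this
    linarith
  have h : DD (V1 Jm l) p (fun q => ∑ i, Jm k l i * q.1 i)
      (∑ i, Jm k l i * (V1 Jm l p).1 i) :=
    DD.sum Finset.univ fun i _ => (DD_x p i).smul (Jm k l i)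
  exact h.congr_d (by simp [V1, Pi.single_apply, hd])

lemma DD_U1 (Jm : Fin ν → Matrix (Fin μ) (Fin μ) ℝ) (hskew : ∀ k, (Jm k).transpose = -(Jm k))
    (l : Fin μ) (i : ℕ) {p : Pt μ ν} (ha : 0 < p.2.2) :
    DD (V1 Jm l) p (U1 Jm l i) (U1 Jm l (i + 1) p) := by
  have hs : 0 < Real.sqrt p.2.2 := Real.sqrt_pos.mpr ha
  have h2 := Real.sq_sqrt ha.le
  have hsa := DD_sqrt_a Jm l ha
  have hN : DD (V1 Jm l) p Nx (2 * p.1 l * Real.sqrt p.2.2) :=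
    (DD_Nx p).congr_d (by simp [V1, Pi.single_apply])
  have hM : DD (V1 Jm l) p Mz (Real.sqrt p.2.2 * Yl Jm l p) :=
    (DD_Mz p).congr_d (by
      simp only [V1, Yl, Finset.mul_sum, jx]
      exact Finset.sum_congr rfl fun k _ => by ring)
  have hx : DD (V1 Jm l) p (fun q => q.1 l) (Real.sqrt p.2.2) :=
    (DD_x p l).congr_d (by simp [V1])
  have ha' : DD (V1 Jm l) p (fun q => q.2.2) 0 := (DD_a p).congr_d (by simp [V1])
  have hY : DD (V1 Jm l) p (Yl Jm l) (Real.sqrt p.2.2 / 2 * Zl Jm l p) := by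
    refine (DD.sum Finset.univ fun k _ => (DD_z p k).mul (DD_jx Jm hskew l k p)).congr_d ?_
    simp only [V1, Zl, Finset.mul_sum, jx]
    exact Finset.sum_congr rfl fun k _ => by ring
  have hZ : DD (V1 Jm l) p (Zl Jm l) 0 :=
    (DD.sum Finset.univ fun k _ => (DD_jx Jm hskew l k p).sq).congr_d (by simp)
  have hE : DD (V1 Jm l) p Ea (2 * p.1 l * Real.sqrt p.2.2 / 8) :=
    ((ha'.mul (DD.const (1 / 2))).add (DD_Bx p hN)).congr_d (by simp)
  match i with
  | 0 =>
    refine (DD_uu ha hN hM).congr_d ?_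
    simp only [U1, V1, Ea]
    set s := Real.sqrt p.2.2
    rw [← h2]
    field_simp
    ring
  | 1 =>
    refine ((((hE.mul hx).smul (1 / 2)).add (hY.smul (1 / 4))).mul
      (hsa.inv hs.ne')).congr_d ?_
    simp only [U1]
    field_simp
    ring
  | 2 =>
    refine (((hx.sq.smul (1 / 8)).add (hE.smul (1 / 2))).add (hZ.smul (1 / 8))).congr_d ?_
    simp only [U1]
    ring
  | 3 =>
    refine ((hsa.mul hx).smul (3 / 8)).congr_d ?_
    simp only [U1]
    rw [← sq, h2]
    ring
  | 4 => exact (ha'.smul (3 / 8)).congr_d (by simp [U1])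
  | i + 5 => exact DD.const 0

lemma U1_even (Jm : Fin ν → Matrix (Fin μ) (Fin μ) ℝ) (l : Fin μ) (i : ℕ) (hi : Even i)
    {p : Pt μ ν} (ha : 0 < p.2.2) : |U1 Jm l i p| ≤ (2 + kap Jm l) * uu p := by
  have hu := one_le_uu ha
  have hk := kap_nonneg Jm l
  have hN := Nx_le ha
  have hN0 := Nx_nonneg p
  have hM0 := Mz_nonneg p
  have hZ := Zl_le Jm l p
  have hZ0 : 0 ≤ Zl Jm l p := Finset.sum_nonneg fun _ _ => sq_nonneg _
  have h1 := quarter_le_uu ha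
  have hx : p.1 l ^ 2 ≤ Nx p :=
    Finset.single_le_sum (f := fun k => p.1 k ^ 2) (fun _ _ => sq_nonneg _) (Finset.mem_univ l)
  have hB : 0 < Bx p := by unfold Bx; positivity
  have hE0 : 0 < Ea p := by unfold Ea; positivity
  have hE : Ea p ≤ 2 * uu p := by
    have h2 := uu_mul ha
    have h3 : p.2.2 / 2 + Bx p = Ea p := by unfold Ea; ring
    have h4 : p.2.2 ≤ 2 * Ea p := by rw [← h3]; linarith
    rw [h3] at h2
    have h5 : p.2.2 * Ea p ≤ p.2.2 * (2 * uu p) := by nlinarith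
    exact le_of_mul_le_mul_left h5 ha
  have hku : 0 ≤ kap Jm l * uu p := by positivity
  have hkN : kap Jm l * Nx p ≤ kap Jm l * (4 * uu p) := by gcongr; linarith
  match i with
  | 0 => simp only [U1]; rw [abs_of_nonneg (by linarith)]; linarith
  | 1 => simp at hi
  | 2 => simp only [U1]; rw [abs_of_nonneg (by positivity)]; linarith
  | 3 => exact absurd hi (by decide)
  | 4 => simp only [U1]; rw [abs_of_nonneg (by positivity)]; linarith
  | i + 5 => simp only [U1]; rw [abs_zero]; positivity

lemma U1_odd (Jm : Fin ν → Matrix (Fin μ) (Fin μ) ℝ) (l : Fin μ) (i : ℕ) (hi : Odd i)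
    {p : Pt μ ν} (ha : 0 < p.2.2) :
    U1 Jm l i p ^ 2 ≤ (3 + 2 * kap Jm l) * (uu p * (uu p - 1)) := by
  have hu := one_le_uu ha
  have hk := kap_nonneg Jm l
  have hN := Nx_le ha
  have hN0 := Nx_nonneg p
  have hM0 := Mz_nonneg p
  have hZ := Zl_le Jm l p
  have hY := Yl_sq_le Jm l p
  have h1 := quarter_le_uu ha
  have h2 := Real.sq_sqrt ha.le
  have hx : p.1 l ^ 2 ≤ Nx p :=
    Finset.single_le_sum (f := fun k => p.1 k ^ 2) (fun _ _ => sq_nonneg _) (Finset.mem_univ l)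
  have hu1 : 0 ≤ uu p - 1 := by linarith
  have hP : 0 ≤ uu p * (uu p - 1) := by positivity
  match i with
  | 0 => simp at hi
  | 1 =>
    have hm := uu_mul ha
    have h3 : p.2.2 / 2 + Bx p = Ea p := by unfold Ea; ring
    rw [h3] at hm
    have hEx : Ea p ^ 2 * p.1 l ^ 2 ≤ Ea p ^ 2 * Nx p := by gcongr
    have hMZ : Mz p * Zl Jm l p ≤ Mz p * (kap Jm l * Nx p) := by gcongr
    have hkE : 0 ≤ kap Jm l * Nx p * Ea p ^ 2 := by positivity
    have hNM : 0 ≤ Nx p * Mz p := by positivity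
    have h4 : (1 / 2 * (Ea p * p.1 l) + 1 / 4 * Yl Jm l p) ^ 2 ≤
        (1 + kap Jm l) / 2 * Nx p * (uu p * p.2.2) := by
      rw [hm]
      nlinarith [sq_nonneg (1 / 2 * (Ea p * p.1 l) - 1 / 4 * Yl Jm l p)]
    have h5 : (1 + kap Jm l) / 2 * Nx p * (uu p * p.2.2) ≤
        (3 + 2 * kap Jm l) * (uu p * (uu p - 1)) * p.2.2 := by
      have : (1 + kap Jm l) / 2 * Nx p * (uu p * p.2.2) ≤
        (1 + kap Jm l) / 2 * (4 * (uu p - 1)) * (uu p * p.2.2) := by gcongr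
      have h6 : 0 ≤ uu p * (uu p - 1) * p.2.2 := by positivity
      linarith
    simp only [U1]
    rw [mul_pow, inv_pow, h2, ← div_eq_mul_inv, div_le_iff₀ ha]
    exact h4.trans h5
  | 2 => exact absurd hi (by decide)
  | 3 =>
    simp only [U1]
    rw [mul_pow, mul_pow, h2]
    have h3 : p.2.2 * p.1 l ^ 2 ≤ (4 * uu p) * (4 * (uu p - 1)) := by
      apply mul_le_mul <;> first | positivity | linarith
    have h6 : 0 ≤ kap Jm l * (uu p * (uu p - 1)) := by positivity
    linarith
  | 4 => exact absurd hi (by decide)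
  | i + 5 => simp only [U1]; rw [zero_pow two_ne_zero]; positivity

/-- On `a > 0` the distance is `arcosh (2u - 1)`, hence differentiable where it is positive. -/
lemma differentiableAt_dist {r : Pt μ ν → ℝ} (hr0 : ∀ p : Pt μ ν, 0 < p.2.2 → 0 ≤ r p)
    (hreq : ∀ p : Pt μ ν, 0 < p.2.2 → Real.cosh (r p / 2) ^ 2 = coshExpr μ ν p)
    {p : Pt μ ν} (ha : 0 < p.2.2) (hr : 0 < r p) : DifferentiableAt ℝ r p := by
  have hc : ∀ q : Pt μ ν, 0 < q.2.2 → 2 * uu q - 1 = Real.cosh (r q) := by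
    intro q hq
    rw [← coshExpr_eq_uu hq, ← hreq q hq]
    have h1 := Real.cosh_two_mul (r q / 2)
    have h2 := Real.cosh_sq (r q / 2)
    rw [show 2 * (r q / 2) = r q by ring] at h1
    linarith
  have h1 : 1 < 2 * uu p - 1 := by
    rw [hc p ha]
    exact Real.one_lt_cosh.mpr hr.ne'
  have hu : DifferentiableAt ℝ (uu (μ := μ) (ν := ν)) p :=
    (DD_uu (V := id) ha (DD_Nx p) (DD_Mz p)).differentiableAt
  have h2 : DifferentiableAt ℝ (fun q : Pt μ ν => Real.arcosh (2 * uu q - 1)) p :=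
    DifferentiableAt.comp (g := Real.arcosh) (f := fun q : Pt μ ν => 2 * uu q - 1) p
      (Real.hasDerivAt_arcosh h1).differentiableAt ((hu.const_mul 2).sub_const 1)
  refine h2.congr_of_eventuallyEq ?_
  have hpos : ∀ᶠ q : Pt μ ν in 𝓝 p, 0 < q.2.2 :=
    (continuous_snd.comp continuous_snd).continuousAt.eventually (lt_mem_nhds ha)
  filter_upwards [hpos] with q hq
  rw [hc q hq, Real.arcosh_cosh (hr0 q hq)]

end

theorem space_derivative_bound_single_field (μ ν : ℕ) (hμ : Even μ) (hν : 1 ≤ ν)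
    (Jm : Fin ν → Matrix (Fin μ) (Fin μ) ℝ)
    (hskew : ∀ k, (Jm k).transpose = -(Jm k))
    (hH : ∀ k l, Jm k * Jm l + Jm l * Jm k =
      if k = l then (-2 : ℝ) • (1 : Matrix (Fin μ) (Fin μ) ℝ) else 0)
    (r : Pt μ ν → ℝ)
    (hr0 : ∀ p : Pt μ ν, 0 < p.2.2 → 0 ≤ r p)
    (hreq : ∀ p : Pt μ ν, 0 < p.2.2 → Real.cosh (r p / 2) ^ 2 = coshExpr μ ν p)
    (k : ℕ) (j : Fin (μ + ν + 1)) :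
    ∃ C : ℝ, 0 < C ∧ ∀ t : ℝ, 0 < t → ∀ p : Pt μ ν, 0 < p.2.2 → 0 < r p →
      |(Xf μ ν Jm j)^[k] (fun q => heat μ ν t (r q)) p| ≤
        C * Psi k (r p) t * heat μ ν t (r p) := by
  set Ω : Set (Pt μ ν) := {p | 0 < p.2.2 ∧ 0 < r p}
  have hrd : ∀ p ∈ Ω, DifferentiableAt ℝ r p := fun p hp =>
    differentiableAt_dist hr0 hreq hp.1 hp.2
  have hΩ : ∀ p ∈ Ω, Ω ∈ 𝓝 p := by
    intro p hp
    have hpos : ∀ᶠ q : Pt μ ν in 𝓝 p, 0 < q.2.2 :=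
      (continuous_snd.comp continuous_snd).continuousAt.eventually (lt_mem_nhds hp.1)
    filter_upwards [hpos, (hrd p hp).continuousAt.eventually (lt_mem_nhds hp.2)] with q h1 h2
    exact ⟨h1, h2⟩
  have hcosh : ∀ p ∈ Ω, Real.cosh (r p / 2) ^ 2 = uu p := fun p hp => by
    rw [hreq p hp.1, coshExpr_eq_uu hp.1]
  have hF : ∀ N, CM Lam N (fun t => heat μ ν t.val) := fun N => CM_heat μ ν N hν
  suffices h : ∃ C : ℝ, 0 < C ∧ ∀ t : TT, ∀ p ∈ Ω,
      |(Xf μ ν Jm j)^[k] (fun q => heat μ ν t.val (r q)) p| ≤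
        C * Psi k (r p) t.val * heat μ ν t.val (r p) by
    obtain ⟨C, hC0, hC⟩ := h
    exact ⟨C, hC0, fun t ht p ha hr => hC ⟨t, ht⟩ p ⟨ha, hr⟩⟩
  by_cases h0 : (j : ℕ) = 0
  · exact iterate_bound (V := V0) (U := U0) (F := fun t => heat μ ν t.val) (Xf μ ν Jm j)
      (fun f p _ hf => Xf_zero Jm j h0 hf) hΩ (fun i p hp => DD_U0 i hp.1) (fun p hp => hp.2) hrd
      (fun p hp => by rw [hcosh p hp, U0_zero]) hF
      (fun i hi => ⟨1, zero_le_one, fun p hp => by rw [U0_zero]; exact U0_even i hi hp.1⟩)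
      (fun i hi => ⟨1, zero_le_one, fun p hp => by rw [U0_zero]; exact U0_odd i hi hp.1⟩) k
  by_cases hm : (j : ℕ) ≤ μ
  · have hk := kap_nonneg Jm ⟨(j : ℕ) - 1, by omega⟩
    exact iterate_bound (V := V1 Jm ⟨(j : ℕ) - 1, by omega⟩)
      (U := U1 Jm ⟨(j : ℕ) - 1, by omega⟩) (F := fun t => heat μ ν t.val) (Xf μ ν Jm j)
      (fun f p _ hf => Xf_x Jm j h0 hm hf) hΩ (fun i p hp => DD_U1 Jm hskew _ i hp.1)
      (fun p hp => hp.2) hrd hcosh hF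
      (fun i hi => ⟨_, by positivity, fun p hp => U1_even Jm _ i hi hp.1⟩)
      (fun i hi => ⟨_, by positivity, fun p hp => U1_odd Jm _ i hi hp.1⟩) k
  · exact iterate_bound (V := V2 ⟨(j : ℕ) - μ - 1, by have := j.isLt; omega⟩)
      (U := U2 ⟨(j : ℕ) - μ - 1, by have := j.isLt; omega⟩)
      (F := fun t => heat μ ν t.val) (Xf μ ν Jm j)
      (fun f p _ hf => Xf_z Jm j h0 hm hf) hΩ (fun i p hp => DD_U2 _ i hp.1)
      (fun p hp => hp.2) hrd hcosh hF
      (fun i hi => ⟨2, by norm_num, fun p hp => U2_even _ i hi hp.1⟩)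
      (fun i hi => ⟨4, by norm_num, fun p hp => U2_odd _ i hi hp.1⟩) k

end DR
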